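/- Let Φ = {φ_a}_{a∈A} be a self-conformal IFS on ℝ^d with attractor X, let {A_b}_{b∈A} be a family of subsets of A, and suppose there is c₁ > 0 such that for every b ∈ A and all distinct a, a′ ∈ A_b, dist(φ_a(X), φ_{a′}(X)) ≥ c₁. Then there exists c ∈ (0,1] with the following property: for every sequence (b_n)_{n≥1} ∈ A^ℕ and all finite words a = (a_1,…,a_m) and a′ = (a′_1,…,a′_{m′}) with a_j ∈ A_{b_j} for 1 ≤ j ≤ m and a′_j ∈ A_{b_j} for 1 ≤ j ≤ m′, such that neither word is a prefix of the other, one has c·diam(φ_{a∧a′}(X)) ≤ dist(φ_a(X), φ_{a′}(X)) ≤ diam(φ_{a∧a′}(X)), where a∧a′ is the maximal common prefix of a and a′ and, if a∧a′ is the empty word, φ_{a∧a′} is interpreted as the identity map. -/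

import Mathlib

noncomputable section
open MeasureTheory Metric Filter Topology

variable {E : Type*} [NormedAddCommGroup E] [NormedSpace ℝ E]

/-- `f` is a contraction with ratio `r ∈ (0,1)`. -/
def IsContractionWith (r : ℝ) (f : E → E) : Prop :=
  0 < r ∧ r < 1 ∧ ∀ x y, ‖f x - f y‖ ≤ r * ‖x - y‖

/-- `f` is a contracting similarity with ratio `r ∈ (0,1)`. -/
def IsSimilarityWith (r : ℝ) (f : E → E) : Prop :=
  0 < r ∧ r < 1 ∧ ∀ x y, ‖f x - f y‖ = r * ‖x - y‖

/-- A self-conformal IFS. -/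
def IsSelfConformalIFS {A : Type*} [Fintype A] (φ : A → E → E) : Prop :=
  2 ≤ Fintype.card A ∧
  (∀ a, ∃ r, IsContractionWith r (φ a)) ∧
  (∀ a, ContDiff ℝ 1 (φ a)) ∧
  (∀ a x, 0 < ‖fderiv ℝ (φ a) x‖ ∧ ∀ v, ‖fderiv ℝ (φ a) x v‖ = ‖fderiv ℝ (φ a) x‖ * ‖v‖) ∧
  (∃ H α₀ : ℝ, 0 < H ∧ 0 < α₀ ∧ ∀ a x y,
    |‖fderiv ℝ (φ a) x‖ - ‖fderiv ℝ (φ a) y‖| ≤ H * ‖x - y‖ ^ α₀) ∧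
  (∃ a₁ a₂ x₁ x₂, φ a₁ x₁ = x₁ ∧ φ a₂ x₂ = x₂ ∧ x₁ ≠ x₂)

/-- A self-similar IFS. -/
def IsSelfSimilarIFS {A : Type*} [Fintype A] (φ : A → E → E) : Prop :=
  2 ≤ Fintype.card A ∧
  (∀ a, ∃ r, IsSimilarityWith r (φ a)) ∧
  (∃ a₁ a₂ x₁ x₂, φ a₁ x₁ = x₁ ∧ φ a₂ x₂ = x₂ ∧ x₁ ≠ x₂)

/-- The IFS is affinely irreducible: no (nonempty) proper affine subspace is preserved. -/
def AffinelyIrreducible {A : Type*} (φ : A → E → E) : Prop :=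
  ¬ ∃ W : AffineSubspace ℝ E, (W : Set E).Nonempty ∧ W ≠ ⊤ ∧
      ∀ a, φ a '' (W : Set E) ⊆ (W : Set E)

/-- Closed `ε`-neighbourhood of an affine subspace. -/
def affNbhd (W : AffineSubspace ℝ E) (ε : ℝ) : Set E :=
  {y | Metric.infDist y (W : Set E) ≤ ε}

/-- topological support of a measure -/
def msupport [MeasurableSpace E] (μ : Measure E) : Set E :=
  {x | ∀ r : ℝ, 0 < r → 0 < μ (Metric.ball x r)}

/-- distance between two sets -/
def setDist (S T : Set E) : ℝ := sInf (Set.image2 dist S T)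

/-- map corresponding to a finite word (as a list) -/
def listMap {A : Type*} (φ : A → E → E) : List A → E → E
  | [] => id
  | a :: l => φ a ∘ listMap φ l

/-- map corresponding to the first `n` letters of an infinite word -/
def wordMap {A : Type*} (φ : A → E → E) : ℕ → (ℕ → A) → E → E
  | 0, _ => id
  | n + 1, a => φ (a 0) ∘ wordMap φ n (fun k => a (k + 1))

/-- set of `Ψ`-well-approximable vectors in `ℝ^d` -/
def WApprox (d : ℕ) (Ψ : ℕ → ℝ) : Set (EuclideanSpace ℝ (Fin d)) :=
  {x | {pq : (Fin d → ℤ) × ℕ | 0 < pq.2 ∧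
        ∀ i, |x i - (pq.1 i : ℝ) / (pq.2 : ℝ)| ≤ Ψ pq.2}.Infinite}

/-- set of singular vectors in `ℝ^d` -/
def Sing (d : ℕ) : Set (EuclideanSpace ℝ (Fin d)) :=
  {x | ∀ c : ℝ, 0 < c → ∃ T : ℝ, 0 < T ∧ ∀ t : ℝ, T ≤ t →
    ∃ q : ℕ, 0 < q ∧ (q : ℝ) < t ∧
      ∀ i, |(q : ℝ) * x i - round ((q : ℝ) * x i)| ≤ c * t ^ (-(1 : ℝ) / (d : ℝ))}

/-!
In dimension at least two, `C¹` conformal contractions of the whole space are rigid: their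
derivative is constant. In the plane they are holomorphic or antiholomorphic with bounded
derivative, so Liouville's theorem applies. In dimension at least three, the pullbacks `(Df)⁻¹ e`
of constant fields are infinitesimal conformal deformations. A null-Lagrangian (Caccioppoli)
estimate makes this meaningful for `C¹` maps: the pullbacks are weak conformal Killing fields.
These form the finite-dimensional space of quadratic polynomial fields, and comparing the pullback
of every constant field with this explicit form forces `Df` to be constant.

Hence in every dimension `f q - f p = Df(ξ) (q - p)` for some `ξ` on the segment from `p` to `q`,
the line being the classical mean value theorem. The Hölder condition then bounds the logarithmic
distortion of `φ_a` on the hull of `φ_w(X)` by a constant times `r ^ (α |w|)`, and the geometric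
series bounds the distortion of all words at once. Beyond their common prefix `w`, two
incomparable words land in different first-level pieces, at distance at least `c₁`; applying `φ_w`
scales this distance and the diameter of `X` by comparable factors.
-/

open scoped InnerProductSpace ContDiff

section SumOfMinors

variable {V : Type*} [NormedAddCommGroup V] [InnerProductSpace ℝ V]

/-- Twice the sum of the principal `2 × 2` minors of `N`, a null Lagrangian when applied to a
Jacobian matrix. -/
def minorSum (N : V →L[ℝ] V) : ℝ :=
  LinearMap.trace ℝ V N ^ 2 - LinearMap.trace ℝ V (N ∘L N)

variable {ι : Type*} [Fintype ι]

lemma opNorm_sq_le_sum_sq_norm (b : OrthonormalBasis ι ℝ V) (N : V →L[ℝ] V) :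
    ‖N‖ ^ 2 ≤ ∑ i, ‖N (b i)‖ ^ 2 := by
  refine (Real.le_sqrt (norm_nonneg _) (by positivity)).1 <|
    N.opNorm_le_bound (Real.sqrt_nonneg _) fun x => abs_le_of_sq_le_sq' ?_ (by positivity) |>.2
  rw [mul_pow, Real.sq_sqrt (by positivity)]
  calc ‖N x‖ ^ 2 = ‖∑ i, ⟪b i, x⟫_ℝ • N (b i)‖ ^ 2 := by
        conv_lhs => rw [← b.sum_repr' x, map_sum]
        simp only [map_smul]
    _ ≤ (∑ i, ‖⟪b i, x⟫_ℝ‖ * ‖N (b i)‖) ^ 2 := by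
        gcongr
        exact norm_sum_le_of_le _ fun i _ => (norm_smul _ _).le
    _ ≤ (∑ i, ‖⟪b i, x⟫_ℝ‖ ^ 2) * ∑ i, ‖N (b i)‖ ^ 2 := Finset.sum_mul_sq_le_sq_mul_sq _ _ _
    _ = (∑ i, ‖N (b i)‖ ^ 2) * ‖x‖ ^ 2 := by rw [b.sum_sq_norm_inner_right, mul_comm]

lemma minorSum_eq_of_isConformalMap_id_add {N : V →L[ℝ] V}
    (hN : IsConformalMap (ContinuousLinearMap.id ℝ V + N)) (b : OrthonormalBasis ι ℝ V) :
    Fintype.card ι * minorSum N =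
      (Fintype.card ι - 2) * LinearMap.trace ℝ V N ^ 2
        + (Fintype.card ι - LinearMap.trace ℝ V N) * ∑ i, ‖N (b i)‖ ^ 2
        + Fintype.card ι * ∑ i, ⟪N (b i), N (N (b i))⟫_ℝ := by
  obtain ⟨c, -, hc⟩ := (isConformalMap_iff _).1 hN
  have hdefect : ∀ u w, ⟪u, N w⟫_ℝ + ⟪w, N u⟫_ℝ + ⟪N u, N w⟫_ℝ = (c - 1) * ⟪u, w⟫_ℝ := by
    intro u w
    have h := hc u w
    simp only [add_apply, ContinuousLinearMap.id_apply, inner_add_left, inner_add_right] at h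
    rw [real_inner_comm (N u) w]
    linarith
  have hdiag : 2 * LinearMap.trace ℝ V N + ∑ i, ‖N (b i)‖ ^ 2 = Fintype.card ι * (c - 1) := by
    have h := Finset.sum_congr rfl fun i (_ : i ∈ Finset.univ) => hdefect (b i) (b i)
    simp only [← two_mul, Finset.sum_add_distrib, ← Finset.mul_sum, real_inner_self_eq_norm_sq,
      b.norm_eq_one] at h
    simpa [LinearMap.trace_eq_sum_inner _ b, mul_comm] using h
  have hsq : LinearMap.trace ℝ V (N ∘L N) + ∑ i, ‖N (b i)‖ ^ 2
      + ∑ i, ⟪N (b i), N (N (b i))⟫_ℝ = (c - 1) * LinearMap.trace ℝ V N := by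
    have h := Finset.sum_congr rfl fun i (_ : i ∈ Finset.univ) => hdefect (b i) (N (b i))
    simp only [Finset.sum_add_distrib, ← Finset.mul_sum, real_inner_self_eq_norm_sq] at h
    simpa [LinearMap.trace_eq_sum_inner _ b] using h
  rw [minorSum]
  linear_combination (Fintype.card ι : ℝ) * (-hsq) + LinearMap.trace ℝ V N * hdiag

lemma minorSum_eq_sum (b : OrthonormalBasis ι ℝ V) (N : V →L[ℝ] V) :
    minorSum N = ∑ i, ∑ j,
      (⟪b i, N (b i)⟫_ℝ * ⟪b j, N (b j)⟫_ℝ - ⟪b i, N (b j)⟫_ℝ * ⟪b j, N (b i)⟫_ℝ) := by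
  have hcomp (i : ι) :
      ⟪b i, N (N (b i))⟫_ℝ = ∑ j, ⟪b i, N (b j)⟫_ℝ * ⟪b j, N (b i)⟫_ℝ := by
    conv_lhs => rw [← b.sum_repr' (N (b i)), map_sum, inner_sum]
    simp only [map_smul, real_inner_smul_right, mul_comm]
  simp only [minorSum, LinearMap.trace_eq_sum_inner _ b, ContinuousLinearMap.coe_coe,
    ContinuousLinearMap.comp_apply, hcomp, Finset.sum_sub_distrib, sq, Finset.sum_mul_sum]

variable [FiniteDimensional ℝ V]

lemma trace_smulRight_clm (η : V →L[ℝ] ℝ) (v : V) :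
    LinearMap.trace ℝ V (η.smulRight v : V →L[ℝ] V) = η v :=
  LinearMap.trace_smulRight (η : V →ₗ[ℝ] ℝ) v

lemma minorSum_smul_add_smulRight (c : ℝ) (N : V →L[ℝ] V) (η : V →L[ℝ] ℝ) (v : V) :
    minorSum (c • N + η.smulRight v) =
      c ^ 2 * minorSum N + 2 * c * (η v * LinearMap.trace ℝ V N - η (N v)) := by
  have hcomp : (c • N + η.smulRight v) ∘L (c • N + η.smulRight v) =
      c ^ 2 • (N ∘L N) + c • η.smulRight (N v) + c • (η ∘L N).smulRight v
        + η v • η.smulRight v := by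
    ext x
    simp only [ContinuousLinearMap.comp_apply, add_apply, smul_apply,
      ContinuousLinearMap.smulRight_apply, map_add, map_smul]
    module
  simp only [minorSum, hcomp, ContinuousLinearMap.toLinearMap_add,
    ContinuousLinearMap.toLinearMap_smul, map_add, map_smul, trace_smulRight_clm, smul_eq_mul,
    ContinuousLinearMap.comp_apply]
  ring

lemma abs_trace_le (N : V →L[ℝ] V) :
    |LinearMap.trace ℝ V N| ≤ Module.finrank ℝ V * ‖N‖ := by
  set b := stdOrthonormalBasis ℝ V
  rw [LinearMap.trace_eq_sum_inner _ b]
  calc |∑ i, ⟪b i, N (b i)⟫_ℝ| ≤ ∑ i, |⟪b i, N (b i)⟫_ℝ| := Finset.abs_sum_le_sum_abs _ _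
    _ ≤ ∑ _i : Fin (Module.finrank ℝ V), ‖N‖ := by
        gcongr with i
        simpa using (abs_real_inner_le_norm (b i) (N (b i))).trans
          (mul_le_mul_of_nonneg_left (N.le_opNorm (b i)) (norm_nonneg _))
    _ = Module.finrank ℝ V * ‖N‖ := by simp

lemma continuous_minorSum : Continuous (minorSum : (V →L[ℝ] V) → ℝ) := by
  have htrace : Continuous fun N : V →L[ℝ] V => LinearMap.trace ℝ V N :=
    ((LinearMap.trace ℝ V).comp
      (ContinuousLinearMap.coeLM ℝ : (V →L[ℝ] V) →ₗ[ℝ] V →ₗ[ℝ] V)).continuous_of_finiteDimensional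
  exact (htrace.pow 2).sub (htrace.comp (continuous_id.clm_comp continuous_id))

lemma sq_opNorm_le_two_mul_minorSum (hV : 2 ≤ Module.finrank ℝ V) {N : V →L[ℝ] V}
    (hN : IsConformalMap (ContinuousLinearMap.id ℝ V + N)) (hsmall : ‖N‖ ≤ 1 / 4) :
    ‖N‖ ^ 2 ≤ 2 * minorSum N := by
  set b := stdOrthonormalBasis ℝ V
  have hidentity := minorSum_eq_of_isConformalMap_id_add hN b
  rw [Fintype.card_fin] at hidentity
  set d : ℝ := (Module.finrank ℝ V : ℝ) with hd
  set τ := LinearMap.trace ℝ V N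
  set F := ∑ i, ‖N (b i)‖ ^ 2 with hF
  have hd2 : 2 ≤ d := by rw [hd]; exact_mod_cast hV
  have hcubic : -(1 / 4 * F) ≤ ∑ i, ⟪N (b i), N (N (b i))⟫_ℝ := by
    rw [hF, Finset.mul_sum, ← Finset.sum_neg_distrib]
    refine Finset.sum_le_sum fun i _ => (abs_le.1 ?_).1
    calc |⟪N (b i), N (N (b i))⟫_ℝ| ≤ ‖N (b i)‖ * ‖N (N (b i))‖ := abs_real_inner_le_norm _ _
      _ ≤ ‖N (b i)‖ * (1 / 4 * ‖N (b i)‖) := by gcongr; exact N.le_of_opNorm_le hsmall _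
      _ = 1 / 4 * ‖N (b i)‖ ^ 2 := by ring
  have htrace : τ ≤ d / 4 := by
    have := (le_abs_self _).trans (abs_trace_le N)
    nlinarith
  have hFnorm := opNorm_sq_le_sum_sq_norm b N
  have hF0 : 0 ≤ F := by positivity
  have hlower : d * (F / 2) ≤ d * minorSum N := by
    rw [hidentity]
    nlinarith [mul_nonneg (sub_nonneg.2 hd2) (sq_nonneg τ),
      mul_nonneg (sub_nonneg.2 htrace) hF0]
  linarith [le_of_mul_le_mul_left hlower (by linarith)]

end SumOfMinors

section NullLagrangian

open scoped Convolution

variable {G : Type*} [NormedAddCommGroup G] [NormedSpace ℝ G] [FiniteDimensional ℝ G]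
  [MeasurableSpace G] [BorelSpace G] {μ : Measure G} [μ.IsAddHaarMeasure]
  {F : Type*} [NormedAddCommGroup F] [NormedSpace ℝ F]

lemma fderiv_convolution_left_apply {k : G → ℝ} {q : G → F} (hk : ContDiff ℝ 1 k)
    (hkc : HasCompactSupport k) (hq : Continuous q) (x a : G) :
    fderiv ℝ (k ⋆[ContinuousLinearMap.lsmul ℝ ℝ, μ] q) x a =
      ((fun y => fderiv ℝ k y a) ⋆[ContinuousLinearMap.lsmul ℝ ℝ, μ] q) x := by
  rw [(hkc.hasFDerivAt_convolution_left (ContinuousLinearMap.lsmul ℝ ℝ) hk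
    hq.locallyIntegrable x).fderiv]
  have hexists : ConvolutionExistsAt (fderiv ℝ k) q x
      (ContinuousLinearMap.precompL G (ContinuousLinearMap.lsmul ℝ ℝ)) μ :=
    (HasCompactSupport.convolutionExists_left _ (hkc.fderiv ℝ)
      (hk.continuous_fderiv one_ne_zero) hq.locallyIntegrable) x
  rw [convolution, convolution, ContinuousLinearMap.integral_apply hexists]
  rfl

lemma fderiv_convolution_right_apply {k : G → ℝ} {q : G → F} (hk : Continuous k)
    (hq : ContDiff ℝ 1 q) (hqc : HasCompactSupport q) (x a : G) :
    fderiv ℝ (k ⋆[ContinuousLinearMap.lsmul ℝ ℝ, μ] q) x a =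
      (k ⋆[ContinuousLinearMap.lsmul ℝ ℝ, μ] (fun y => fderiv ℝ q y a)) x := by
  rw [(hqc.hasFDerivAt_convolution_right (ContinuousLinearMap.lsmul ℝ ℝ)
    hk.locallyIntegrable hq x).fderiv]
  exact convolution_precompR_apply _ hk.locallyIntegrable (hqc.fderiv ℝ)
    (hq.continuous_fderiv one_ne_zero) x a

-- For `C¹` functions second derivatives are unavailable; instead both sides are the mixed second
-- derivative of the convolution of `p` and `q`, with each derivative falling on either factor.
lemma convolution_fderiv_comm {p q : G → ℝ} (hp : ContDiff ℝ 1 p) (hpc : HasCompactSupport p)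
    (hq : ContDiff ℝ 1 q) (hqc : HasCompactSupport q) (x a b : G) :
    ((fun y => fderiv ℝ p y a) ⋆[ContinuousLinearMap.lsmul ℝ ℝ, μ] fun y => fderiv ℝ q y b) x =
      ((fun y => fderiv ℝ p y b) ⋆[ContinuousLinearMap.lsmul ℝ ℝ, μ] fun y => fderiv ℝ q y a)
        x := by
  have hpa : Continuous fun y => fderiv ℝ p y a :=
    (hp.continuous_fderiv one_ne_zero).clm_apply continuous_const
  have hqa : Continuous fun y => fderiv ℝ q y a :=
    (hq.continuous_fderiv one_ne_zero).clm_apply continuous_const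
  rw [← fderiv_convolution_right_apply hpa hq hqc, ← fderiv_convolution_left_apply hp hpc hqa]
  congr 2
  ext z
  rw [← fderiv_convolution_left_apply hp hpc hq.continuous,
    fderiv_convolution_right_apply hp.continuous hq hqc]

lemma integral_fderiv_mul_fderiv_comm {p q : G → ℝ} (hp : ContDiff ℝ 1 p)
    (hpc : HasCompactSupport p) (hq : ContDiff ℝ 1 q) (hqc : HasCompactSupport q) (a b : G) :
    ∫ x, fderiv ℝ p x a * fderiv ℝ q x b ∂μ = ∫ x, fderiv ℝ p x b * fderiv ℝ q x a ∂μ := by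
  have h := convolution_fderiv_comm (μ := μ) (p := fun x => p (-x)) (hp.comp contDiff_neg)
    (hpc.comp_homeomorph (Homeomorph.neg _)) hq hqc 0 a b
  have hneg (y : G) : fderiv ℝ (fun x => p (-x)) y = -fderiv ℝ p (-y) := by
    simpa using fderiv_comp_smul (f := p) (x := y) (-1 : ℝ)
  simp only [convolution, hneg, neg_apply, zero_sub, ContinuousLinearMap.lsmul_apply,
    smul_eq_mul, neg_mul, integral_neg, neg_inj] at h
  rw [← integral_neg_eq_self fun x => fderiv ℝ p x a * fderiv ℝ q x b, h,
    ← integral_neg_eq_self fun x => fderiv ℝ p x b * fderiv ℝ q x a]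

end NullLagrangian

section Caccioppoli

variable {V : Type*} [NormedAddCommGroup V] [InnerProductSpace ℝ V] [FiniteDimensional ℝ V]

lemma quarter_mul_le_minorSum_smul_add_smulRight (hV : 2 ≤ Module.finrank ℝ V) {N : V →L[ℝ] V}
    (hN : IsConformalMap (ContinuousLinearMap.id ℝ V + N)) (hsmall : ‖N‖ ≤ 1 / 4) (c : ℝ)
    (η : V →L[ℝ] ℝ) (v : V) :
    1 / 4 * (c ^ 2 * ‖N‖ ^ 2) ≤ minorSum (c • N + η.smulRight v)
      + (2 * (Module.finrank ℝ V + 1) * (‖η‖ * ‖v‖)) ^ 2 := by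
  set d : ℝ := (Module.finrank ℝ V : ℝ)
  have hminor : c ^ 2 * ‖N‖ ^ 2 ≤ 2 * (c ^ 2 * minorSum N) := by
    nlinarith [mul_le_mul_of_nonneg_left (sq_opNorm_le_two_mul_minorSum hV hN hsmall)
      (sq_nonneg c)]
  have hcross : |η v * LinearMap.trace ℝ V N - η (N v)| ≤ (d + 1) * (‖η‖ * ‖v‖) * ‖N‖ := by
    have h₁ : |η v * LinearMap.trace ℝ V N| ≤ ‖η‖ * ‖v‖ * (d * ‖N‖) := by
      rw [abs_mul]
      exact mul_le_mul (η.le_opNorm v) (abs_trace_le N) (abs_nonneg _) (by positivity)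
    have h₂ : |η (N v)| ≤ ‖η‖ * (‖N‖ * ‖v‖) :=
      (η.le_opNorm _).trans (by gcongr; exact N.le_opNorm v)
    calc _ ≤ |η v * LinearMap.trace ℝ V N| + |η (N v)| := abs_sub _ _
      _ ≤ ‖η‖ * ‖v‖ * (d * ‖N‖) + ‖η‖ * (‖N‖ * ‖v‖) := add_le_add h₁ h₂
      _ = _ := by ring
  have hyoung : |2 * c * (η v * LinearMap.trace ℝ V N - η (N v))| ≤
      1 / 4 * (c ^ 2 * ‖N‖ ^ 2) + (2 * (d + 1) * (‖η‖ * ‖v‖)) ^ 2 := by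
    rw [abs_mul, abs_mul, abs_two]
    calc 2 * |c| * |η v * LinearMap.trace ℝ V N - η (N v)|
        ≤ 2 * |c| * ((d + 1) * (‖η‖ * ‖v‖) * ‖N‖) := by gcongr
      _ ≤ _ := by
        rw [← sq_abs c]
        nlinarith [sq_nonneg (1 / 2 * (|c| * ‖N‖) - 2 * (d + 1) * (‖η‖ * ‖v‖))]
  rw [minorSum_smul_add_smulRight]
  linarith [(abs_le.1 hyoung).1]

variable [MeasurableSpace V] [BorelSpace V]

lemma integral_minorSum_fderiv_eq_zero {W : V → V} (hW : ContDiff ℝ 1 W)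
    (hWc : HasCompactSupport W) : ∫ x, minorSum (fderiv ℝ W x) = 0 := by
  set b := stdOrthonormalBasis ℝ V
  set w : Fin (Module.finrank ℝ V) → V → ℝ := fun i x => ⟪b i, W x⟫_ℝ with hw_def
  have hw (i) : ContDiff ℝ 1 (w i) := contDiff_const.inner ℝ hW
  have hwc (i) : HasCompactSupport (w i) := hWc.comp_left (inner_zero_right _)
  have hcoord (x a : V) (i) : ⟪b i, fderiv ℝ W x a⟫_ℝ = fderiv ℝ (w i) x a := by
    rw [hw_def, fderiv_inner_apply ℝ (differentiableAt_const _)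
      ((hW.differentiable one_ne_zero) x)]
    simp
  have h_int (i j) (a c : V) : Integrable fun x => fderiv ℝ (w i) x a * fderiv ℝ (w j) x c :=
    Continuous.integrable_of_hasCompactSupport
      ((((hw i).continuous_fderiv one_ne_zero).clm_apply continuous_const).mul
        (((hw j).continuous_fderiv one_ne_zero).clm_apply continuous_const))
      ((hwc i).fderiv_apply ℝ a).mul_right
  have hminor (i j) : Integrable fun x => fderiv ℝ (w i) x (b i) * fderiv ℝ (w j) x (b j)
      - fderiv ℝ (w i) x (b j) * fderiv ℝ (w j) x (b i) :=
    (h_int i j _ _).sub (h_int i j _ _)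
  simp only [minorSum_eq_sum b, hcoord]
  rw [integral_finsetSum _ fun i _ => integrable_finsetSum _ fun j _ => hminor i j]
  refine Finset.sum_eq_zero fun i _ => ?_
  rw [integral_finsetSum _ fun j _ => hminor i j]
  refine Finset.sum_eq_zero fun j _ => ?_
  rw [integral_sub (h_int i j _ _) (h_int i j _ _), sub_eq_zero]
  exact integral_fderiv_mul_fderiv_comm (hw i) (hwc i) (hw j) (hwc j) _ _

lemma integral_sq_mul_sq_norm_fderiv_le (hV : 2 ≤ Module.finrank ℝ V) {v : V → V} {χ : V → ℝ}
    (hχ : ContDiff ℝ 1 χ) (hχc : HasCompactSupport χ)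
    (hv : ∀ x ∈ tsupport χ, ContDiffAt ℝ 1 v x)
    (hconf : ∀ x ∈ tsupport χ, IsConformalMap (ContinuousLinearMap.id ℝ V + fderiv ℝ v x))
    (hsmall : ∀ x ∈ tsupport χ, ‖fderiv ℝ v x‖ ≤ 1 / 4)
    {B K : ℝ} (hB : ∀ x, ‖fderiv ℝ χ x‖ ≤ B) (hK : ∀ x ∈ tsupport χ, ‖v x‖ ≤ K) :
    ∫ x, χ x ^ 2 * ‖fderiv ℝ v x‖ ^ 2 ≤
      4 * (2 * (Module.finrank ℝ V + 1) * (B * K)) ^ 2 * volume.real (tsupport χ) := by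
  set W : V → V := fun x => χ x • v x
  set C : ℝ := (2 * (Module.finrank ℝ V + 1) * (B * K)) ^ 2 with hC
  have hWsupp : tsupport W ⊆ tsupport χ := tsupport_smul_subset_left χ v
  have hW : ContDiff ℝ 1 W :=
    (contMDiff_of_tsupport fun x hx =>
      (hχ.contDiffAt.smul (hv x (hWsupp hx))).contMDiffAt).contDiff
  have hWc : HasCompactSupport W := hχc.smul_right
  have hWd (x) (hx : x ∈ tsupport χ) :
      fderiv ℝ W x = χ x • fderiv ℝ v x + (fderiv ℝ χ x).smulRight (v x) :=
    fderiv_fun_smul (hχ.differentiable one_ne_zero x) ((hv x hx).differentiableAt one_ne_zero)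
  have hpoint (x) : 1 / 4 * (χ x ^ 2 * ‖fderiv ℝ v x‖ ^ 2) ≤
      minorSum (fderiv ℝ W x) + (tsupport χ).indicator (fun _ => C) x := by
    by_cases hx : x ∈ tsupport χ
    · rw [hWd x hx, Set.indicator_of_mem hx]
      refine (quarter_mul_le_minorSum_smul_add_smulRight hV (hconf x hx) (hsmall x hx) _ _ _).trans
        (add_le_add_right ?_ _)
      rw [hC]
      have hB0 := (norm_nonneg _).trans (hB x)
      gcongr
      exacts [hB x, hK x hx]
    · have hWx : fderiv ℝ W x = 0 := by
        by_contra h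
        exact hx (hWsupp (support_fderiv_subset ℝ h))
      simp [Set.indicator_of_notMem hx, image_eq_zero_of_notMem_tsupport hx, hWx, minorSum]
  have hindicator : Integrable ((tsupport χ).indicator fun _ => C) (volume : Measure V) :=
    (integrable_indicator_iff (isClosed_tsupport χ).measurableSet).2
      (integrableOn_const hχc.isCompact.measure_lt_top.ne)
  have hminor : Integrable fun x => minorSum (fderiv ℝ W x) :=
    (continuous_minorSum.comp (hW.continuous_fderiv one_ne_zero)).integrable_of_hasCompactSupport
      ((hWc.fderiv ℝ).comp_left (by simp [minorSum]))
  have hle := integral_mono_of_nonneg (ae_of_all volume fun x => by positivity)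
    (hminor.add hindicator) (ae_of_all _ hpoint)
  simp only [Pi.add_apply] at hle
  rw [integral_const_mul, integral_add hminor hindicator, integral_minorSum_fderiv_eq_zero hW hWc,
    integral_indicator (isClosed_tsupport χ).measurableSet, setIntegral_const, smul_eq_mul] at hle
  linarith

end Caccioppoli

section ConformalVariation

variable {F : Type*} [NormedAddCommGroup F] [NormedSpace ℝ F]

/-- The displacement of `x` when its image is moved to `f x + t • e` and pulled back by a
local inverse `g` of `f`. -/
def pulledBackTranslation (f g : F → F) (e : F) (t : ℝ) (x : F) : F := g (f x + t • e) - x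

lemma hasFDerivAt_pulledBackTranslation {f g : F → F} {e x : F} {t : ℝ}
    (hf : DifferentiableAt ℝ f x)
    (hg : HasFDerivAt g (fderiv ℝ f (g (f x + t • e))).inverse (f x + t • e)) :
    HasFDerivAt (pulledBackTranslation f g e t)
      ((fderiv ℝ f (g (f x + t • e))).inverse ∘L fderiv ℝ f x - ContinuousLinearMap.id ℝ F) x :=
  (hg.comp x (hf.hasFDerivAt.add_const (t • e))).sub (hasFDerivAt_id x)

lemma tendsto_pulledBackTranslation {f g : F → F} {x : F} (e : F) (hx : g (f x) = x)
    (hg : HasFDerivAt g (fderiv ℝ f x).inverse (f x)) :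
    Tendsto (fun t : ℝ => t⁻¹ • pulledBackTranslation f g e t x) (𝓝[>] 0)
      (𝓝 (VectorField.pullback ℝ f (fun _ => e) x)) := by
  have hline : HasDerivAt (fun t : ℝ => f x + t • e) e 0 := by
    simpa only [one_smul, id_eq] using ((hasDerivAt_id (0 : ℝ)).smul_const e).const_add (f x)
  have hg₀ : HasFDerivAt g (fderiv ℝ f x).inverse (f x + (0 : ℝ) • e) := by
    rwa [zero_smul, add_zero]
  have hslope := (hg₀.comp_hasDerivAt (0 : ℝ) hline).tendsto_slope_zero_right
  simp only [Function.comp_apply, zero_add, zero_smul, add_zero, hx] at hslope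
  exact hslope

variable {V : Type*} [NormedAddCommGroup V] [InnerProductSpace ℝ V]

/-- An infinitesimal conformal deformation `x ↦ x + v t x` (as `t ↓ 0`) of the identity on `U`,
with initial velocity `Y`. -/
structure IsConformalVariation (v : ℝ → V → V) (Y : V → V) (U : Set V) : Prop where
  contDiffAt : ∀ᶠ t in 𝓝[>] 0, ∀ x ∈ U, ContDiffAt ℝ 1 (v t) x
  conformal : ∀ᶠ t in 𝓝[>] 0, ∀ x ∈ U,
    IsConformalMap (ContinuousLinearMap.id ℝ V + fderiv ℝ (v t) x)
  norm_fderiv_le : ∀ᶠ t in 𝓝[>] 0, ∀ x ∈ U, ‖fderiv ℝ (v t) x‖ ≤ 1 / 4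
  norm_le : ∃ C, ∀ᶠ t in 𝓝[>] 0, ∀ x ∈ U, ‖v t x‖ ≤ C * t
  tendsto : ∀ x ∈ U, Tendsto (fun t => t⁻¹ • v t x) (𝓝[>] 0) (𝓝 (Y x))

lemma isConformalMap_fderiv {f : V → V} (hf : Conformal f) (x : V) :
    IsConformalMap (fderiv ℝ f x) :=
  conformalAt_iff_isConformalMap_fderiv.1 (hf.conformalAt x)

lemma norm_isConformalMap_apply {L : V →L[ℝ] V} (hL : IsConformalMap L) (u : V) :
    ‖L u‖ = ‖L‖ * ‖u‖ := by
  obtain ⟨c, -, li, rfl⟩ := hL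
  rcases subsingleton_or_nontrivial V with hV | hV
  · simp only [Subsingleton.elim u 0, map_zero, norm_zero, mul_zero]
  · rw [smul_apply, norm_smul, norm_smul, LinearIsometry.norm_toContinuousLinearMap, mul_one,
      LinearIsometry.coe_toContinuousLinearMap, li.norm_map]

variable [FiniteDimensional ℝ V]

lemma exists_equiv_of_isConformalMap {L : V →L[ℝ] V} (hL : IsConformalMap L) :
    ∃ e : V ≃L[ℝ] V, (e : V →L[ℝ] V) = L :=
  ⟨(LinearEquiv.ofInjectiveEndo (L : V →ₗ[ℝ] V) hL.injective).toContinuousLinearEquiv, rfl⟩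

lemma isConformalMap_inverse {L : V →L[ℝ] V} (hL : IsConformalMap L) :
    IsConformalMap L.inverse := by
  obtain ⟨e, rfl⟩ := exists_equiv_of_isConformalMap hL
  obtain ⟨c, hc, h⟩ := (isConformalMap_iff _).1 hL
  refine (isConformalMap_iff _).2 ⟨c⁻¹, inv_pos.2 hc, fun u w => ?_⟩
  have huw := h (e.symm u) (e.symm w)
  simp only [ContinuousLinearEquiv.coe_coe, ContinuousLinearEquiv.apply_symm_apply] at huw
  rw [ContinuousLinearMap.inverse_equiv, huw, inv_mul_cancel_left₀ hc.ne']
  rfl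

lemma continuous_inverse_fderiv {f : V → V} (hf : ContDiff ℝ 1 f) (hfc : Conformal f) :
    Continuous fun x => (fderiv ℝ f x).inverse := by
  refine continuous_iff_continuousAt.2 fun x => ?_
  obtain ⟨e, he⟩ := exists_equiv_of_isConformalMap (isConformalMap_fderiv hfc x)
  have hinv := (contDiffAt_map_inverse (n := 1) e).continuousAt
  rw [he] at hinv
  exact hinv.comp (f := fderiv ℝ f) (hf.continuous_fderiv one_ne_zero).continuousAt

lemma exists_localInverse {f : V → V} (hf : ContDiff ℝ 1 f) (hfc : Conformal f) (x₀ : V) :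
    ∃ g : V → V, (∀ᶠ x in 𝓝 x₀, g (f x) = x) ∧ ∀ᶠ y in 𝓝 (f x₀), ContDiffAt ℝ 1 g y ∧
      HasFDerivAt g (fderiv ℝ f (g y)).inverse y := by
  obtain ⟨e, he⟩ := exists_equiv_of_isConformalMap (isConformalMap_fderiv hfc x₀)
  have hderiv (x) : HasFDerivAt f (fderiv ℝ f x) x := (hf.differentiable one_ne_zero x).hasFDerivAt
  let h := hf.contDiffAt.toOpenPartialHomeomorph f (he ▸ hderiv x₀) one_ne_zero
  have hx₀ : x₀ ∈ h.source := hf.contDiffAt.mem_toOpenPartialHomeomorph_source _ one_ne_zero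
  refine ⟨h.symm, h.eventually_left_inverse hx₀, ?_⟩
  filter_upwards [h.open_target.mem_nhds (h.map_source hx₀)] with y hy
  obtain ⟨e', he'⟩ := exists_equiv_of_isConformalMap (isConformalMap_fderiv hfc (h.symm y))
  have hy' : HasFDerivAt h (e' : V →L[ℝ] V) (h.symm y) := he' ▸ hderiv (h.symm y)
  refine ⟨h.contDiffAt_symm hy hy' hf.contDiffAt, ?_⟩
  rw [← he', ContinuousLinearMap.inverse_equiv]
  exact h.hasFDerivAt_symm hy hy'

lemma tendsto_inverse_fderiv_comp {f g : V → V} (hf : ContDiff ℝ 1 f) (hfc : Conformal f)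
    {x₀ : V} (e : V) (hx₀ : g (f x₀) = x₀) (hg : ContinuousAt g (f x₀)) :
    Tendsto (fun p : ℝ × V => (fderiv ℝ f (g (f p.2 + p.1 • e))).inverse ∘L fderiv ℝ f p.2
      - ContinuousLinearMap.id ℝ V) (𝓝 (0, x₀)) (𝓝 0) := by
  have hgcont : ContinuousAt (fun p : ℝ × V => g (f p.2 + p.1 • e)) (0, x₀) := by
    have hfcont := hf.continuous
    refine ContinuousAt.comp (g := g) ?_ (by fun_prop)
    simpa only [zero_smul, add_zero] using hg
  have hcont := ((continuous_inverse_fderiv hf hfc).continuousAt.comp hgcont).clm_comp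
    ((hf.continuous_fderiv one_ne_zero).comp continuous_snd).continuousAt
  have hid : (fderiv ℝ f (g (f x₀ + (0 : ℝ) • e))).inverse ∘L fderiv ℝ f x₀
      = ContinuousLinearMap.id ℝ V := by
    obtain ⟨E, hE⟩ := exists_equiv_of_isConformalMap (isConformalMap_fderiv hfc x₀)
    simp only [zero_smul, add_zero, hx₀, ← hE, ContinuousLinearMap.inverse_equiv,
      ContinuousLinearEquiv.coe_symm_comp_coe]
  have hlim := hcont.tendsto.sub_const (ContinuousLinearMap.id ℝ V)
  simpa only [Function.comp_apply, hid, sub_self] using hlim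

lemma exists_isConformalVariation {f : V → V} (hf : ContDiff ℝ 1 f) (hfc : Conformal f)
    (x₀ e : V) : ∃ v, ∃ δ > 0,
      IsConformalVariation v (VectorField.pullback ℝ f fun _ => e) (ball x₀ δ) := by
  obtain ⟨g, hgf, hg⟩ := exists_localInverse hf hfc x₀
  have hdiff := hf.differentiable one_ne_zero
  obtain ⟨K, s, hs, hK⟩ := hg.self_of_nhds.1.exists_lipschitzOnWith
  have hmove : Tendsto (fun p : ℝ × V => f p.2 + p.1 • e) (𝓝 (0, x₀)) (𝓝 (f x₀)) := by
    have hfcont := hf.continuous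
    exact Continuous.tendsto' (by fun_prop) _ _ (by simp)
  have hfix : Tendsto (fun p : ℝ × V => f p.2) (𝓝 (0, x₀)) (𝓝 (f x₀)) :=
    (hf.continuous.comp continuous_snd).tendsto _
  have hsmall := (tendsto_inverse_fderiv_comp hf hfc e hgf.self_of_nhds
    hg.self_of_nhds.1.continuousAt).norm.eventually_le_const (u := 1 / 4) (by simp)
  obtain ⟨δ, hδ, hnear⟩ := Metric.eventually_nhds_iff_ball.1 <|
    ((continuous_snd.tendsto ((0 : ℝ), x₀)).eventually hgf).and <|
    ((hfix.eventually hs).and (hmove.eventually hs)).and <|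
    (hfix.eventually hg).and <| (hmove.eventually hg).and hsmall
  have hev {P : ℝ → V → Prop} (hP : ∀ p ∈ ball ((0 : ℝ), x₀) δ, 0 < p.1 → P p.1 p.2) :
      ∀ᶠ t in 𝓝[>] 0, ∀ x ∈ ball x₀ δ, P t x := by
    filter_upwards [Ioo_mem_nhdsGT hδ] with t ht x hx
    refine hP (t, x) ?_ ht.1
    rw [← ball_prod_same]
    exact ⟨by simpa [abs_of_pos ht.1] using ht.2, hx⟩
  refine ⟨pulledBackTranslation f g e, δ, hδ, hev fun p hp _ => ?_, hev fun p hp _ => ?_,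
    hev fun p hp _ => ?_, ⟨K * ‖e‖, hev fun p hp hp₀ => ?_⟩, fun x hx => ?_⟩
  · obtain ⟨-, -, -, ⟨hgc, -⟩, -⟩ := hnear p hp
    exact (ContDiffAt.comp (g := g) p.2 hgc (hf.contDiffAt.add contDiffAt_const)).sub contDiffAt_id
  · obtain ⟨-, -, -, ⟨-, hgd⟩, -⟩ := hnear p hp
    rw [(hasFDerivAt_pulledBackTranslation (hdiff p.2) hgd).fderiv, add_sub_cancel]
    exact (isConformalMap_inverse (isConformalMap_fderiv hfc _)).comp (isConformalMap_fderiv hfc _)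
  · obtain ⟨-, -, -, ⟨-, hgd⟩, hle⟩ := hnear p hp
    rwa [(hasFDerivAt_pulledBackTranslation (hdiff p.2) hgd).fderiv]
  · obtain ⟨hinv, ⟨hfs, hms⟩, -⟩ := hnear p hp
    have hdist := hK.dist_le_mul _ hms _ hfs
    rwa [hinv, dist_self_add_left, norm_smul, Real.norm_of_nonneg hp₀.le, dist_eq_norm,
      mul_comm p.1, ← mul_assoc] at hdist
  · obtain ⟨hinv, -, ⟨-, hgd⟩, -⟩ := hnear (0, x) (by
      rw [← ball_prod_same]; exact ⟨mem_ball_self hδ, hx⟩)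
    simp only at hinv hgd
    rw [hinv] at hgd
    exact tendsto_pulledBackTranslation e hinv hgd

end ConformalVariation

section WeakConformalKilling

variable {F : Type*} [NormedAddCommGroup F] [NormedSpace ℝ F] [FiniteDimensional ℝ F]

lemma exists_contDiff_eq_one_tsupport_subset {K U : Set F} (hK : IsCompact K) (hU : IsOpen U)
    (hKU : K ⊆ U) : ∃ χ : F → ℝ, ContDiff ℝ 1 χ ∧ HasCompactSupport χ ∧ tsupport χ ⊆ U ∧
      ∀ x ∈ K, χ x = 1 := by
  obtain ⟨L, hL, hKL, hLU⟩ := exists_compact_between hK hU hKU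
  obtain ⟨χ, hχ₁, hχ₀, -⟩ := exists_contMDiffMap_one_nhds_of_subset_interior (n := 1)
    (modelWithCornersSelf ℝ F) hK.isClosed hKL
  have hsupp : tsupport χ ⊆ L := closure_minimal
    (fun x hx => by_contra fun hxL => hx (hχ₀ x hxL)) hL.isClosed
  exact ⟨χ, χ.contMDiff.contDiff, hL.of_isClosed_subset (isClosed_tsupport _) hsupp,
    hsupp.trans hLU, fun x hx => hχ₁.self_of_nhdsSet x hx⟩

variable {V : Type*} [NormedAddCommGroup V] [InnerProductSpace ℝ V]

lemma inner_add_inner_eq_neg_inner {N : V →L[ℝ] V}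
    (hN : IsConformalMap (ContinuousLinearMap.id ℝ V + N)) {u w : V} (huw : ⟪u, w⟫_ℝ = 0) :
    ⟪N u, w⟫_ℝ + ⟪N w, u⟫_ℝ = -⟪N u, N w⟫_ℝ := by
  obtain ⟨c, -, hc⟩ := (isConformalMap_iff _).1 hN
  have h := hc u w
  simp only [add_apply, ContinuousLinearMap.id_apply, inner_add_left, inner_add_right, huw,
    mul_zero, real_inner_comm (N w) u] at h
  linarith

variable [FiniteDimensional ℝ V] [MeasurableSpace V] [BorelSpace V]

/-- The distributional conformal Killing equation for `Y` on `U`: the symmetric part of `DY` is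
pointwise a multiple of the identity, tested against orthogonal pairs of vectors. -/
def IsWeakConformalKilling (Y : V → V) (U : Set V) : Prop :=
  ∀ k : V → ℝ, ContDiff ℝ 1 k → HasCompactSupport k → tsupport k ⊆ U →
    ∀ u w : V, ⟪u, w⟫_ℝ = 0 → ∫ x, (fderiv ℝ k x u * ⟪Y x, w⟫_ℝ + fderiv ℝ k x w * ⟪Y x, u⟫_ℝ) = 0

lemma integrable_fderiv_mul_inner {k : V → ℝ} (hk : ContDiff ℝ 1 k) (hkc : HasCompactSupport k)
    {v : V → V} (hv : ∀ x ∈ tsupport k, ContinuousAt v x) (u w : V) :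
    Integrable fun x => fderiv ℝ k x u * ⟪v x, w⟫_ℝ := by
  have hsupp : tsupport (fun x => fderiv ℝ k x u * ⟪v x, w⟫_ℝ) ⊆ tsupport k :=
    tsupport_mul_subset_left.trans (tsupport_fderiv_apply_subset ℝ u)
  refine (continuous_of_tsupport fun x hx => ?_).integrable_of_hasCompactSupport
    (hkc.of_isClosed_subset (isClosed_tsupport _) hsupp)
  exact (((hk.continuous_fderiv one_ne_zero).clm_apply continuous_const).continuousAt).mul
    ((hv x (hsupp hx)).inner continuousAt_const)

lemma integrable_mul_inner_fderiv {k : V → ℝ} (hk : ContDiff ℝ 1 k) (hkc : HasCompactSupport k)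
    {v : V → V} (hv : ∀ x ∈ tsupport k, ContDiffAt ℝ 1 v x) (u w : V) :
    Integrable fun x => k x * ⟪fderiv ℝ v x u, w⟫_ℝ := by
  refine (continuous_of_tsupport fun x hx => ?_).integrable_of_hasCompactSupport hkc.mul_right
  exact hk.continuous.continuousAt.mul <|
    (((hv x (tsupport_mul_subset_left hx)).continuousAt_fderiv one_ne_zero).clm_apply
      continuousAt_const).inner continuousAt_const

lemma integral_fderiv_mul_inner_eq_neg {k : V → ℝ} (hk : ContDiff ℝ 1 k)
    (hkc : HasCompactSupport k) {v : V → V} (hv : ∀ x ∈ tsupport k, ContDiffAt ℝ 1 v x) (u w : V) :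
    ∫ x, fderiv ℝ k x u * ⟪v x, w⟫_ℝ = -∫ x, k x * ⟪fderiv ℝ v x u, w⟫_ℝ := by
  have hderiv (x) (hx : x ∈ tsupport k) :
      fderiv ℝ (fun y => ⟪v y, w⟫_ℝ) x u = ⟪fderiv ℝ v x u, w⟫_ℝ := by
    rw [fderiv_inner_apply ℝ ((hv x hx).differentiableAt one_ne_zero)
      (differentiableAt_const w), fderiv_const_apply, zero_apply, inner_zero_right, zero_add]
  have hmul : (fun x => k x * fderiv ℝ (fun y => ⟪v y, w⟫_ℝ) x u)
      = fun x => k x * ⟪fderiv ℝ v x u, w⟫_ℝ := by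
    ext x
    by_cases hx : x ∈ tsupport k
    · rw [hderiv x hx]
    · rw [image_eq_zero_of_notMem_tsupport hx, zero_mul, zero_mul]
  have hkv : Integrable fun x => k x * ⟪v x, w⟫_ℝ := by
    refine (continuous_of_tsupport fun x hx => ?_).integrable_of_hasCompactSupport hkc.mul_right
    exact hk.continuous.continuousAt.mul
      ((hv x (tsupport_mul_subset_left hx)).continuousAt.inner continuousAt_const)
  have hparts := integral_mul_fderiv_eq_neg_fderiv_mul_of_integrable (v := u)
    (integrable_fderiv_mul_inner hk hkc (fun x hx => (hv x hx).continuousAt) u w)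
    (hmul ▸ integrable_mul_inner_fderiv hk hkc hv u w) hkv
    (fun x _ => hk.differentiable one_ne_zero x)
    (fun x hx => ((hv x hx).differentiableAt one_ne_zero).inner ℝ (differentiableAt_const w))
  rw [← hmul, hparts, neg_neg]

lemma abs_integral_fderiv_mul_inner_add_le {k χ : V → ℝ} (hk : ContDiff ℝ 1 k)
    (hkc : HasCompactSupport k) (hχ : ContDiff ℝ 1 χ) (hχc : HasCompactSupport χ)
    (hχk : ∀ x ∈ tsupport k, χ x = 1) {v : V → V} (hv : ∀ x ∈ tsupport χ, ContDiffAt ℝ 1 v x)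
    (hconf : ∀ x ∈ tsupport χ, IsConformalMap (ContinuousLinearMap.id ℝ V + fderiv ℝ v x))
    {M : ℝ} (hM : ∀ x, ‖k x‖ ≤ M) {u w : V} (huw : ⟪u, w⟫_ℝ = 0) :
    |∫ x, (fderiv ℝ k x u * ⟪v x, w⟫_ℝ + fderiv ℝ k x w * ⟪v x, u⟫_ℝ)| ≤
      M * ‖u‖ * ‖w‖ * ∫ x, χ x ^ 2 * ‖fderiv ℝ v x‖ ^ 2 := by
  have hsub : tsupport k ⊆ tsupport χ := fun x hx =>
    subset_tsupport _ (by simp [hχk x hx])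
  have hvk (x) (hx : x ∈ tsupport k) := hv x (hsub hx)
  have hvc (x) (hx : x ∈ tsupport k) := (hvk x hx).continuousAt
  have hquad : ∫ x, (fderiv ℝ k x u * ⟪v x, w⟫_ℝ + fderiv ℝ k x w * ⟪v x, u⟫_ℝ) =
      ∫ x, k x * ⟪fderiv ℝ v x u, fderiv ℝ v x w⟫_ℝ := by
    rw [integral_add (integrable_fderiv_mul_inner hk hkc hvc u w)
      (integrable_fderiv_mul_inner hk hkc hvc w u), integral_fderiv_mul_inner_eq_neg hk hkc hvk,
      integral_fderiv_mul_inner_eq_neg hk hkc hvk, ← neg_add,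
      ← integral_add (integrable_mul_inner_fderiv hk hkc hvk u w)
      (integrable_mul_inner_fderiv hk hkc hvk w u), ← integral_neg]
    congr with x
    by_cases hx : x ∈ tsupport k
    · rw [← mul_add, inner_add_inner_eq_neg_inner (hconf x (hsub hx)) huw, mul_neg, neg_neg]
    · simp [image_eq_zero_of_notMem_tsupport hx]
  have henergy : Integrable fun x => χ x ^ 2 * ‖fderiv ℝ v x‖ ^ 2 := by
    have hsupp : tsupport (fun x => χ x ^ 2 * ‖fderiv ℝ v x‖ ^ 2) ⊆ tsupport χ :=
      tsupport_mul_subset_left.trans (closure_mono fun x hx => by simpa using hx)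
    refine (continuous_of_tsupport fun x hx => ?_).integrable_of_hasCompactSupport
      (hχc.of_isClosed_subset (isClosed_tsupport _) hsupp)
    exact (hχ.continuous.pow 2).continuousAt.mul
      (((hv x (hsupp hx)).continuousAt_fderiv one_ne_zero).norm.pow 2)
  rw [hquad, ← integral_const_mul]
  refine norm_integral_le_of_norm_le (f := fun x => k x * ⟪fderiv ℝ v x u, fderiv ℝ v x w⟫_ℝ)
    (henergy.const_mul _) (ae_of_all _ fun x => ?_)
  by_cases hx : x ∈ tsupport k
  · rw [hχk x hx, one_pow, one_mul, norm_mul]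
    have hM0 := (norm_nonneg _).trans (hM x)
    calc ‖k x‖ * ‖⟪fderiv ℝ v x u, fderiv ℝ v x w⟫_ℝ‖
        ≤ M * ((‖fderiv ℝ v x‖ * ‖u‖) * (‖fderiv ℝ v x‖ * ‖w‖)) := by
          gcongr
          · exact hM x
          · exact (norm_inner_le_norm _ _).trans (by gcongr <;> exact (fderiv ℝ v x).le_opNorm _)
      _ = M * ‖u‖ * ‖w‖ * ‖fderiv ℝ v x‖ ^ 2 := by ring
  · rw [image_eq_zero_of_notMem_tsupport hx, zero_mul, norm_zero]
    have hM0 := (norm_nonneg _).trans (hM x)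
    positivity

lemma tendsto_integral_of_isConformalVariation {v : ℝ → V → V} {Y : V → V} {U : Set V}
    (hv : IsConformalVariation v Y U) {k : V → ℝ} (hk : ContDiff ℝ 1 k)
    (hkc : HasCompactSupport k) (hkU : tsupport k ⊆ U) (u w : V) :
    Tendsto (fun t => t⁻¹ * ∫ x, (fderiv ℝ k x u * ⟪v t x, w⟫_ℝ + fderiv ℝ k x w * ⟪v t x, u⟫_ℝ))
      (𝓝[>] 0)
      (𝓝 (∫ x, (fderiv ℝ k x u * ⟪Y x, w⟫_ℝ + fderiv ℝ k x w * ⟪Y x, u⟫_ℝ))) := by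
  obtain ⟨C, hC⟩ := hv.norm_le
  have hcont (z : V) : Continuous fun x => fderiv ℝ k x z :=
    (hk.continuous_fderiv one_ne_zero).clm_apply continuous_const
  have hzero (x) (hx : x ∉ tsupport k) : fderiv ℝ k x = 0 := by
    by_contra h
    exact hx (support_fderiv_subset ℝ h)
  simp only [← integral_const_mul]
  refine tendsto_integral_filter_of_dominated_convergence
    (fun x => ‖fderiv ℝ k x u‖ * (C * ‖w‖) + ‖fderiv ℝ k x w‖ * (C * ‖u‖)) ?_ ?_ ?_ ?_
  · filter_upwards [hv.contDiffAt] with t ht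
    have hvt (x) (hx : x ∈ tsupport k) := (ht x (hkU hx)).continuousAt
    exact (((integrable_fderiv_mul_inner hk hkc hvt u w).add
      (integrable_fderiv_mul_inner hk hkc hvt w u)).const_mul _).aestronglyMeasurable
  · filter_upwards [hC, self_mem_nhdsWithin] with t ht ht0
    refine ae_of_all _ fun x => ?_
    by_cases hx : x ∈ tsupport k
    · have hbound (z : V) : ‖t⁻¹ * ⟪v t x, z⟫_ℝ‖ ≤ C * ‖z‖ := by
        rw [norm_mul, Real.norm_of_nonneg (inv_nonneg.2 (le_of_lt ht0)), inv_mul_le_iff₀ ht0]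
        calc ‖⟪v t x, z⟫_ℝ‖ ≤ ‖v t x‖ * ‖z‖ := norm_inner_le_norm _ _
          _ ≤ C * t * ‖z‖ := by gcongr; exact ht x (hkU hx)
          _ = t * (C * ‖z‖) := by ring
      calc _ = ‖fderiv ℝ k x u * (t⁻¹ * ⟪v t x, w⟫_ℝ) + fderiv ℝ k x w * (t⁻¹ * ⟪v t x, u⟫_ℝ)‖ := by
            congr 1; ring
        _ ≤ _ := (norm_add_le _ _).trans <| by
            rw [norm_mul (fderiv ℝ k x u), norm_mul (fderiv ℝ k x w)]
            exact add_le_add (mul_le_mul_of_nonneg_left (hbound w) (norm_nonneg _))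
              (mul_le_mul_of_nonneg_left (hbound u) (norm_nonneg _))
    · simp [hzero x hx]
  · have h_int (z : V) : Integrable fun x => ‖fderiv ℝ k x z‖ :=
      ((hcont z).integrable_of_hasCompactSupport (hkc.fderiv_apply ℝ z)).norm
    exact ((h_int u).mul_const _).add ((h_int w).mul_const _)
  · refine ae_of_all _ fun x => ?_
    by_cases hx : x ∈ tsupport k
    · have hlim (z : V) : Tendsto (fun t => t⁻¹ * ⟪v t x, z⟫_ℝ) (𝓝[>] 0) (𝓝 ⟪Y x, z⟫_ℝ) := by
        simpa only [real_inner_smul_left] using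
          (hv.tendsto x (hkU hx)).inner (𝕜 := ℝ) (tendsto_const_nhds (x := z))
      refine (((hlim w).const_mul (fderiv ℝ k x u)).add
        ((hlim u).const_mul (fderiv ℝ k x w))).congr fun t => by ring
    · simp [hzero x hx]

lemma isWeakConformalKilling_of_isConformalVariation (hV : 2 ≤ Module.finrank ℝ V)
    {v : ℝ → V → V} {Y : V → V} {U : Set V} (hU : IsOpen U) (hv : IsConformalVariation v Y U) :
    IsWeakConformalKilling Y U := by
  intro k hk hkc hkU u w huw
  obtain ⟨χ, hχ, hχc, hχU, hχk⟩ := exists_contDiff_eq_one_tsupport_subset hkc hU hkU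
  obtain ⟨B, hB⟩ := (hχ.continuous_fderiv one_ne_zero).bounded_above_of_compact_support
    (hχc.fderiv ℝ)
  obtain ⟨M, hM⟩ := hk.continuous.bounded_above_of_compact_support hkc
  have hM0 := (norm_nonneg _).trans (hM 0)
  obtain ⟨C, hC⟩ := hv.norm_le
  set D := M * ‖u‖ * ‖w‖ *
    (4 * (2 * (Module.finrank ℝ V + 1) * (B * C)) ^ 2 * volume.real (tsupport χ)) with hD
  refine tendsto_nhds_unique (tendsto_integral_of_isConformalVariation hv hk hkc hkU u w) ?_
  have hlinear : Tendsto (fun t => D * t) (𝓝[>] (0 : ℝ)) (𝓝 0) :=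
    (Continuous.tendsto' (by fun_prop) _ _ (mul_zero D)).mono_left nhdsWithin_le_nhds
  refine squeeze_zero_norm' ?_ hlinear
  filter_upwards [hv.contDiffAt, hv.conformal, hv.norm_fderiv_le, hC, self_mem_nhdsWithin]
    with t hsmooth hconf hsmall hle ht
  rw [norm_mul, Real.norm_of_nonneg (inv_nonneg.2 (le_of_lt ht)), inv_mul_le_iff₀ ht]
  calc ‖∫ x, (fderiv ℝ k x u * ⟪v t x, w⟫_ℝ + fderiv ℝ k x w * ⟪v t x, u⟫_ℝ)‖
      ≤ M * ‖u‖ * ‖w‖ * ∫ x, χ x ^ 2 * ‖fderiv ℝ (v t) x‖ ^ 2 :=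
        abs_integral_fderiv_mul_inner_add_le hk hkc hχ hχc hχk (fun x hx => hsmooth x (hχU hx))
          (fun x hx => hconf x (hχU hx)) hM huw
    _ ≤ M * ‖u‖ * ‖w‖ * (4 * (2 * (Module.finrank ℝ V + 1) * (B * (C * t))) ^ 2
          * volume.real (tsupport χ)) := by
        gcongr
        exact integral_sq_mul_sq_norm_fderiv_le hV hχ hχc (fun x hx => hsmooth x (hχU hx))
          (fun x hx => hconf x (hχU hx)) (fun x hx => hsmall x (hχU hx)) hB
          fun x hx => hle x (hχU hx)
    _ = t * (D * t) := by rw [hD]; ring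

end WeakConformalKilling

section ConformalKilling

variable {V : Type*} [NormedAddCommGroup V] [InnerProductSpace ℝ V]

lemma mem_of_hasFDerivAt_of_eventually_mem {F G : Type*} [NormedAddCommGroup F] [NormedSpace ℝ F]
    [NormedAddCommGroup G] [NormedSpace ℝ G] {g : F → G} {g' : F →L[ℝ] G} {x : F}
    {S : Submodule ℝ G} (hS : IsClosed (S : Set G)) (hg : HasFDerivAt g g' x)
    (hmem : ∀ᶠ y in 𝓝 x, g y ∈ S) (u : F) : g' u ∈ S := by
  have hline : Tendsto (fun t : ℝ => x + t • u) (𝓝[>] 0) (𝓝 x) :=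
    (Continuous.tendsto' (by fun_prop) _ _ (by simp)).mono_left nhdsWithin_le_nhds
  refine hS.mem_of_tendsto (hg.hasLineDerivAt u).tendsto_slope_zero_right ?_
  filter_upwards [hline.eventually hmem] with t ht
  exact S.smul_mem _ (S.sub_mem ht hmem.self_of_nhds)

variable (V) in
/-- The Lie algebra `ℝ ⊕ 𝔰𝔬(V)` of the group of linear similarities: skew maps plus scalars. -/
def conformalAlgebra : Submodule ℝ (V →L[ℝ] V) where
  carrier := {B | ∀ u w, ⟪u, w⟫_ℝ = 0 → ⟪B u, w⟫_ℝ + ⟪B w, u⟫_ℝ = 0}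
  zero_mem' u w _ := by simp
  add_mem' hB hC u w huw := by
    simp only [add_apply, inner_add_left]
    linarith [hB u w huw, hC u w huw]
  smul_mem' r B hB u w huw := by
    simp only [smul_apply, real_inner_smul_left, ← mul_add, hB u w huw, mul_zero]

lemma inner_add_inner_of_mem_conformalAlgebra {B : V →L[ℝ] V} (hB : B ∈ conformalAlgebra V)
    {e : V} (he : ‖e‖ = 1) (u w : V) :
    ⟪B u, w⟫_ℝ + ⟪B w, u⟫_ℝ = 2 * ⟪B e, e⟫_ℝ * ⟪u, w⟫_ℝ := by
  have hnorm {a b : V} (hab : ‖a‖ = ‖b‖) : ⟪B a, a⟫_ℝ = ⟪B b, b⟫_ℝ := by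
    have horth : ⟪a + b, a - b⟫_ℝ = 0 := (real_inner_add_sub_eq_zero_iff a b).2 hab
    have := hB _ _ horth
    simp only [map_add, map_sub, inner_add_left, inner_sub_left, inner_add_right,
      inner_sub_right] at this
    linarith
  have hdiag (a : V) : ⟪B a, a⟫_ℝ = ⟪B e, e⟫_ℝ * ⟪a, a⟫_ℝ := by
    have ha : ‖a‖ = ‖‖a‖ • e‖ := by rw [norm_smul, he, mul_one, norm_norm]
    rw [hnorm ha, map_smul, real_inner_smul_left, real_inner_smul_right,
      real_inner_self_eq_norm_sq a]
    ring
  have huw := hdiag (u + w)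
  simp only [map_add, inner_add_left, inner_add_right, hdiag u, hdiag w,
    real_inner_comm u w] at huw
  linarith

variable (V) in
/-- The first prolongation of the conformal algebra, where the second derivatives of conformal
Killing fields live. -/
def conformalProlongation : Submodule ℝ (V →L[ℝ] V →L[ℝ] V) where
  carrier := {S | (∀ u, S u ∈ conformalAlgebra V) ∧ ∀ u v, S u v = S v u}
  zero_mem' := ⟨fun _ => zero_mem _, fun _ _ => rfl⟩
  add_mem' hS hT := ⟨fun u => add_mem (hS.1 u) (hT.1 u), fun u v => by
    simp only [add_apply, hS.2 u v, hT.2 u v]⟩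
  smul_mem' r S hS := ⟨fun u => Submodule.smul_mem _ r (hS.1 u), fun u v => by
    simp only [smul_apply, hS.2 u v]⟩

/-- Koszul's formula, as for the Levi-Civita connection. -/
lemma exists_eq_of_mem_conformalProlongation [CompleteSpace V] {S : V →L[ℝ] V →L[ℝ] V}
    (hS : S ∈ conformalProlongation V) :
    ∃ b : V, ∀ u v, S u v = ⟪b, u⟫_ℝ • v + ⟪b, v⟫_ℝ • u - ⟪u, v⟫_ℝ • b := by
  rcases subsingleton_or_nontrivial V with hV | hV
  · exact ⟨0, fun u v => Subsingleton.elim _ _⟩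
  obtain ⟨e, he⟩ := exists_norm_eq V zero_le_one
  let ℓ : V →L[ℝ] ℝ := innerSL ℝ e ∘L ContinuousLinearMap.apply ℝ V e ∘L S
  refine ⟨(InnerProductSpace.toDual ℝ V).symm ℓ, fun u v => ext_inner_right ℝ fun w => ?_⟩
  have hℓ (a b c : V) : ⟪S a b, c⟫_ℝ + ⟪S a c, b⟫_ℝ = 2 * ℓ a * ⟪b, c⟫_ℝ := by
    rw [inner_add_inner_of_mem_conformalAlgebra (hS.1 a) he b c, real_inner_comm]
    rfl
  have h₁ := hℓ u v w
  have h₂ := hℓ v u w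
  have h₃ := hℓ w u v
  rw [hS.2 v u] at h₂
  rw [hS.2 w u, hS.2 w v] at h₃
  simp only [inner_sub_left, inner_add_left, real_inner_smul_left,
    InnerProductSpace.toDual_symm_apply]
  linarith

lemma exists_unit_orthogonal_pair [FiniteDimensional ℝ V] (hV : 3 ≤ Module.finrank ℝ V) (z v : V) :
    ∃ u, ‖u‖ = 1 ∧ ⟪z, u⟫_ℝ = 0 ∧ ⟪v, u⟫_ℝ = 0 := by
  let S := Submodule.span ℝ (Set.range ![z, v])
  have hS : Module.finrank ℝ S ≤ 2 := finrank_range_le_card ![z, v]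
  have hpos : 0 < Module.finrank ℝ Sᗮ := by
    have := S.finrank_add_finrank_orthogonal
    omega
  have := Module.nontrivial_of_finrank_pos hpos
  obtain ⟨u, hu⟩ := exists_norm_eq Sᗮ zero_le_one
  exact ⟨u, hu, S.inner_right_of_mem_orthogonal (Submodule.subset_span ⟨0, rfl⟩) u.2,
    S.inner_right_of_mem_orthogonal (Submodule.subset_span ⟨1, rfl⟩) u.2⟩

/-- That is, the second prolongation vanishes, which bounds the degree of conformal Killing fields
by two. -/
lemma eq_zero_of_forall_mem_conformalProlongation [FiniteDimensional ℝ V]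
    (hV : 3 ≤ Module.finrank ℝ V) {T : V →L[ℝ] V →L[ℝ] V →L[ℝ] V}
    (hT : ∀ z, T z ∈ conformalProlongation V) (hsymm : ∀ z u, T z u = T u z) : T = 0 := by
  choose β hβ using fun z => exists_eq_of_mem_conformalProlongation (hT z)
  have hform (z v : V) {u : V} (hu : ‖u‖ = 1) (hzu : ⟪z, u⟫_ℝ = 0) (hvu : ⟪v, u⟫_ℝ = 0) :
      ⟪β z, v⟫_ℝ = -(⟪β u, u⟫_ℝ * ⟪z, v⟫_ℝ) := by
    have h : ⟪T z u v, u⟫_ℝ = ⟪T u z v, u⟫_ℝ := by rw [hsymm]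
    simp only [hβ, inner_sub_left, inner_add_left, real_inner_smul_left, hzu, hvu,
      real_inner_self_eq_norm_sq, hu, real_inner_comm v u] at h
    linarith
  have hdiag {u : V} (hu : ‖u‖ = 1) : ⟪β u, u⟫_ℝ = 0 := by
    obtain ⟨z, hz, huz, -⟩ := exists_unit_orthogonal_pair hV u u
    obtain ⟨v, hv, huv, hzv⟩ := exists_unit_orthogonal_pair hV u z
    have h₁ := hform u u hz huz huz
    have h₂ := hform z z hv hzv hzv
    have h₃ := hform v v hu ((real_inner_comm _ _).trans huv) ((real_inner_comm _ _).trans huv)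
    simp only [real_inner_self_eq_norm_sq, hu, hz, hv] at h₁ h₂ h₃
    linarith
  have hβ₀ (z : V) : β z = 0 := ext_inner_right ℝ fun v => by
    obtain ⟨u, hu, hzu, hvu⟩ := exists_unit_orthogonal_pair hV z v
    rw [hform z v hu hzu hvu, hdiag hu, zero_mul, neg_zero, inner_zero_left]
  ext z u v
  simp [hβ, hβ₀]

end ConformalKilling

section Classification

variable {V : Type*} [NormedAddCommGroup V] [InnerProductSpace ℝ V]

/-- The quadratic vector field with prescribed second derivative in the conformal prolongation,
linear part in the conformal algebra, and value at the origin. -/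
def conformalKillingField :
    conformalProlongation V × conformalAlgebra V × V →ₗ[ℝ] V → V where
  toFun p x := (2⁻¹ : ℝ) • p.1.1 x x + p.2.1.1 x + p.2.2
  map_add' p q := by
    ext x
    simp only [Prod.fst_add, Prod.snd_add, Submodule.coe_add, add_apply, smul_add, Pi.add_apply]
    abel
  map_smul' r p := by
    ext x
    simp only [Prod.smul_fst, Prod.smul_snd, Submodule.coe_smul, smul_apply, Pi.smul_apply,
      smul_add, RingHom.id_apply, smul_comm r]

lemma conformalKillingField_apply (p : conformalProlongation V × conformalAlgebra V × V) (x : V) :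
    conformalKillingField p x = (2⁻¹ : ℝ) • p.1.1 x x + p.2.1.1 x + p.2.2 := rfl

lemma contDiff_conformalKillingField {n : WithTop ℕ∞}
    (p : conformalProlongation V × conformalAlgebra V × V) :
    ContDiff ℝ n (conformalKillingField p) :=
  ((contDiff_const.smul (p.1.1.contDiff.clm_apply contDiff_id)).add p.2.1.1.contDiff).add
    contDiff_const

lemma hasFDerivAt_conformalKillingField
    (p : conformalProlongation V × conformalAlgebra V × V) (x : V) :
    HasFDerivAt (conformalKillingField p) (p.1.1 x + p.2.1.1) x := by
  have hquad := ((p.1.1.hasFDerivAt (x := x)).clm_apply (hasFDerivAt_id x)).const_smul (2⁻¹ : ℝ)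
  refine ((hquad.add p.2.1.1.hasFDerivAt).add_const p.2.2).congr_fderiv ?_
  ext u
  have hsymm : p.1.1 u x = p.1.1 x u := p.1.2.2 u x
  simp only [add_apply, smul_apply, ContinuousLinearMap.comp_apply, ContinuousLinearMap.id_apply,
    ContinuousLinearMap.flip_apply, id_eq, hsymm]
  module

lemma exists_eq_conformalKillingField_of_locally {Y : V → V}
    (hY : ∀ x₀, ∃ p, Y =ᶠ[𝓝 x₀] conformalKillingField p) : ∃ p, Y = conformalKillingField p := by
  have hmodel (p) : AnalyticOnNhd ℝ (conformalKillingField (V := V) p) Set.univ :=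
    contDiff_omega_iff_analyticOnNhd.1 (contDiff_conformalKillingField p)
  have hYan : AnalyticOnNhd ℝ Y Set.univ := fun x _ => by
    obtain ⟨p, hp⟩ := hY x
    exact (hmodel p x trivial).congr hp.symm
  obtain ⟨p, hp⟩ := hY 0
  exact ⟨p, hYan.eq_of_eventuallyEq (hmodel p) hp⟩

variable [FiniteDimensional ℝ V]

lemma exists_eqOn_conformalKillingField (hV : 3 ≤ Module.finrank ℝ V) {Y : V → V} {U : Set V}
    (hU : IsOpen U) (hUc : IsPreconnected U) (hY : ContDiff ℝ ∞ Y)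
    (hK : ∀ x ∈ U, fderiv ℝ Y x ∈ conformalAlgebra V) :
    ∃ p, U.EqOn Y (conformalKillingField p) := by
  rcases U.eq_empty_or_nonempty with rfl | ⟨x₀, hx₀⟩
  · exact ⟨0, Set.eqOn_empty _ _⟩
  have hY₁ : ContDiff ℝ ∞ (fderiv ℝ Y) := hY.fderiv_right (by simp)
  have hY₂ : ContDiff ℝ ∞ (fderiv ℝ (fderiv ℝ Y)) := hY₁.fderiv_right (by simp)
  have hd₀ := hY.differentiable (by simp)
  have hd₁ := hY₁.differentiable (by simp)
  have hd₂ := hY₂.differentiable (by simp)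
  have hsmooth : minSmoothness ℝ 2 ≤ ∞ := by
    rw [minSmoothness_of_isRCLikeNormedField]
    exact WithTop.coe_le_coe.2 le_top
  have hsecond (x) (hx : x ∈ U) : fderiv ℝ (fderiv ℝ Y) x ∈ conformalProlongation V :=
    ⟨mem_of_hasFDerivAt_of_eventually_mem (Submodule.closed_of_finiteDimensional _)
      (hd₁ x).hasFDerivAt (eventually_of_mem (hU.mem_nhds hx) hK),
      (hY.contDiffAt.isSymmSndFDerivAt hsmooth).eq⟩
  have hthird (x) (hx : x ∈ U) : fderiv ℝ (fderiv ℝ (fderiv ℝ Y)) x = 0 :=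
    eq_zero_of_forall_mem_conformalProlongation hV
      (mem_of_hasFDerivAt_of_eventually_mem (Submodule.closed_of_finiteDimensional _)
        (hd₂ x).hasFDerivAt (eventually_of_mem (hU.mem_nhds hx) hsecond))
      (hY₁.contDiffAt.isSymmSndFDerivAt hsmooth).eq
  obtain ⟨S, hS⟩ := hU.exists_is_const_of_fderiv_eq_zero hUc hd₂.differentiableOn hthird
  obtain ⟨T, hT⟩ := hU.exists_eq_add_of_fderiv_eq hUc hd₁.differentiableOn
    S.differentiable.differentiableOn fun x hx => by rw [hS x hx, S.fderiv]
  have hSmem : S ∈ conformalProlongation V := hS x₀ hx₀ ▸ hsecond x₀ hx₀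
  have hTmem : T ∈ conformalAlgebra V := by
    rw [eq_sub_of_add_eq' (hT hx₀).symm]
    exact sub_mem (hK x₀ hx₀) (hSmem.1 x₀)
  let q : conformalProlongation V × conformalAlgebra V × V := (⟨S, hSmem⟩, ⟨T, hTmem⟩, 0)
  obtain ⟨c, hc⟩ := hU.exists_eq_add_of_fderiv_eq hUc hd₀.differentiableOn
    (g := conformalKillingField q)
    (fun x _ => (hasFDerivAt_conformalKillingField q x).differentiableAt.differentiableWithinAt)
    fun x hx => by rw [(hasFDerivAt_conformalKillingField q x).fderiv]; exact hT hx
  refine ⟨(q.1, q.2.1, c), fun x hx => ?_⟩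
  rw [hc hx]
  simp only [conformalKillingField_apply, q, add_zero]

end Classification

section WeakClassification

open scoped Convolution

lemma fderiv_comp_const_sub {F : Type*} [NormedAddCommGroup F] [NormedSpace ℝ F] {k : F → ℝ}
    (hk : ContDiff ℝ 1 k) (x y u : F) :
    fderiv ℝ (fun z => k (x - z)) y u = -fderiv ℝ k (x - y) u := by
  have hsub : HasFDerivAt (fun z => x - z) (-ContinuousLinearMap.id ℝ F) y :=
    (hasFDerivAt_id y).const_sub x
  have hcomp : HasFDerivAt (fun z => k (x - z)) _ y :=
    ((hk.differentiable one_ne_zero (x - y)).hasFDerivAt).comp y hsub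
  rw [hcomp.fderiv]
  simp only [ContinuousLinearMap.comp_apply, neg_apply, ContinuousLinearMap.id_apply, map_neg]

lemma exists_contDiffBump_tendsto_rOut_zero {F : Type*} (c : F) {δ : ℝ} (hδ : 0 < δ) :
    ∃ η : ℕ → ContDiffBump c, (∀ n, (η n).rOut ≤ δ) ∧
      Tendsto (fun n => (η n).rOut) atTop (𝓝 0) := by
  have hlt (n : ℕ) : δ / (n + 2) < δ / (n + 1) :=
    div_lt_div_of_pos_left hδ (by positivity) (by linarith)
  refine ⟨fun n => ⟨δ / (n + 2), δ / (n + 1), by positivity, hlt n⟩,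
    fun n => div_le_self hδ.le (le_add_of_nonneg_left n.cast_nonneg), ?_⟩
  simpa only [mul_one_div, mul_zero] using
    (tendsto_one_div_add_atTop_nhds_zero_nat (𝕜 := ℝ)).const_mul δ

variable {V : Type*} [NormedAddCommGroup V] [InnerProductSpace ℝ V] [FiniteDimensional ℝ V]
  [MeasurableSpace V] [BorelSpace V]

lemma inner_fderiv_convolution_apply {k : V → ℝ} (hk : ContDiff ℝ 1 k) (hkc : HasCompactSupport k)
    {Y : V → V} (hY : Continuous Y) (x u w : V) :
    ⟪fderiv ℝ (k ⋆[ContinuousLinearMap.lsmul ℝ ℝ, volume] Y) x u, w⟫_ℝ =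
      -∫ y, fderiv ℝ (fun z => k (x - z)) y u * ⟪Y y, w⟫_ℝ := by
  have h_int : Integrable fun y => fderiv ℝ k (x - y) u • Y y := by
    have hcont : Continuous fun y => fderiv ℝ k (x - y) u :=
      ((hk.continuous_fderiv one_ne_zero).comp (continuous_const.sub continuous_id)).clm_apply
        continuous_const
    exact (hcont.smul hY).integrable_of_hasCompactSupport
      (((hkc.fderiv_apply ℝ u).comp_homeomorph (Homeomorph.subLeft x)).smul_right)
  rw [fderiv_convolution_left_apply hk hkc hY, convolution_lsmul_swap, real_inner_comm,
    ← integral_inner h_int, ← integral_neg]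
  refine integral_congr_ae (Eventually.of_forall fun y => ?_)
  simp only [fderiv_comp_const_sub hk, inner_smul_right, real_inner_comm w, neg_mul, neg_neg]

lemma IsWeakConformalKilling.fderiv_convolution_mem {Y : V → V} {U : Set V}
    (hK : IsWeakConformalKilling Y U) (hY : Continuous Y) {k : V → ℝ} (hk : ContDiff ℝ 1 k)
    (hkc : HasCompactSupport k) {x : V} (hx : ∀ z ∈ tsupport k, x - z ∈ U) :
    fderiv ℝ (k ⋆[ContinuousLinearMap.lsmul ℝ ℝ, volume] Y) x ∈ conformalAlgebra V := by
  intro u w huw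
  have hsmooth : ContDiff ℝ 1 fun z => k (x - z) := hk.comp (contDiff_const.sub contDiff_id)
  have hcompact : HasCompactSupport fun z => k (x - z) :=
    hkc.comp_homeomorph (Homeomorph.subLeft x)
  have hsupp : tsupport (fun z => k (x - z)) ⊆ U := fun z hz => by
    have hmem : x - z ∈ tsupport k :=
      tsupport_comp_subset_preimage k (f := fun z => x - z) (by fun_prop) hz
    simpa only [sub_sub_cancel] using hx _ hmem
  have hweak := hK _ hsmooth hcompact hsupp u w huw
  rw [integral_add (integrable_fderiv_mul_inner hsmooth hcompact (fun _ _ => hY.continuousAt) u w)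
    (integrable_fderiv_mul_inner hsmooth hcompact (fun _ _ => hY.continuousAt) w u)] at hweak
  rw [inner_fderiv_convolution_apply hk hkc hY, inner_fderiv_convolution_apply hk hkc hY]
  linarith

-- The mollifications of `Y` are classical fields, so they are given by quadratic fields; these form
-- a finite-dimensional space, which is closed under pointwise limits.
lemma IsWeakConformalKilling.exists_eqOn_conformalKillingField (hV : 3 ≤ Module.finrank ℝ V)
    {Y : V → V} (hY : Continuous Y) {x₀ : V} {δ : ℝ} (hδ : 0 < δ)
    (hK : IsWeakConformalKilling Y (ball x₀ δ)) :
    ∃ p, (ball x₀ (δ / 2)).EqOn Y (conformalKillingField p) := by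
  obtain ⟨η, hηδ, hη⟩ := exists_contDiffBump_tendsto_rOut_zero (0 : V) (half_pos hδ)
  let Z (n : ℕ) : V → V := (η n).normed volume ⋆[ContinuousLinearMap.lsmul ℝ ℝ, volume] Y
  have hZsmooth (n : ℕ) : ContDiff ℝ ∞ (Z n) :=
    (η n).hasCompactSupport_normed.contDiff_convolution_left _ (η n).contDiff_normed
      hY.locallyIntegrable
  have hZK (n : ℕ) (x) (hx : x ∈ ball x₀ (δ / 2)) : fderiv ℝ (Z n) x ∈ conformalAlgebra V := by
    refine hK.fderiv_convolution_mem hY (η n).contDiff_normed (η n).hasCompactSupport_normed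
      fun z hz => ?_
    rw [(η n).tsupport_normed_eq, mem_closedBall_zero_iff] at hz
    rw [mem_ball_iff_norm] at hx ⊢
    calc ‖x - z - x₀‖ = ‖x - x₀ - z‖ := by rw [sub_right_comm]
      _ ≤ ‖x - x₀‖ + ‖z‖ := norm_sub_le _ _
      _ < δ := by linarith [hηδ n]
  let restricted : Submodule ℝ (ball x₀ (δ / 2) → V) :=
    LinearMap.range (LinearMap.funLeft ℝ V Subtype.val ∘ₗ conformalKillingField)
  have hclosed : IsClosed (restricted : Set (ball x₀ (δ / 2) → V)) :=
    restricted.closed_of_finiteDimensional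
  have hmem : (fun x : ball x₀ (δ / 2) => Y x) ∈ restricted := by
    refine hclosed.mem_of_tendsto (f := fun n x => Z n x) (b := atTop)
      (tendsto_pi_nhds.2 fun x =>
        ContDiffBump.convolution_tendsto_right_of_continuous hη hY (x : V))
      (Eventually.of_forall fun n => ?_)
    obtain ⟨p, hp⟩ := _root_.exists_eqOn_conformalKillingField hV isOpen_ball
      (convex_ball x₀ (δ / 2)).isPreconnected (hZsmooth n) (hZK n)
    exact ⟨p, funext fun x => (hp x.2).symm⟩
  obtain ⟨p, hp⟩ := hmem
  exact ⟨p, fun x hx => (congrFun hp ⟨x, hx⟩).symm⟩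

theorem exists_pullback_eq_conformalKillingField (hV : 3 ≤ Module.finrank ℝ V) {f : V → V}
    (hf : ContDiff ℝ 1 f) (hfc : Conformal f) (e : V) :
    ∃ p, VectorField.pullback ℝ f (fun _ => e) = conformalKillingField p := by
  have hcont : Continuous (VectorField.pullback ℝ f fun _ => e) :=
    (continuous_inverse_fderiv hf hfc).clm_apply continuous_const
  refine exists_eq_conformalKillingField_of_locally fun x₀ => ?_
  obtain ⟨v, δ, hδ, hv⟩ := exists_isConformalVariation hf hfc x₀ e
  obtain ⟨p, hp⟩ := (isWeakConformalKilling_of_isConformalVariation (by omega) isOpen_ball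
    hv).exists_eqOn_conformalKillingField hV hcont hδ
  exact ⟨p, hp.eventuallyEq_of_mem (ball_mem_nhds x₀ (half_pos hδ))⟩

end WeakClassification

section ConformalRigidity

variable {V : Type*} [NormedAddCommGroup V] [InnerProductSpace ℝ V]

lemma eq_zero_of_forall_norm_add_smul_le {c v : V} {M : ℝ} (h : ∀ s : ℝ, ‖c + s • v‖ ≤ M) :
    v = 0 := by
  by_contra hv
  have hline : Tendsto (fun s : ℝ => ‖c + s • v‖) atTop atTop := by
    refine tendsto_atTop_mono (fun s => ?_) (tendsto_atTop_add_const_right _ (-‖c‖)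
      (tendsto_abs_atTop_atTop.atTop_mul_const (norm_pos_iff.2 hv)))
    have := norm_sub_le (c + s • v) c
    rw [add_sub_cancel_left, norm_smul, Real.norm_eq_abs] at this
    linarith
  obtain ⟨s, hs⟩ := (hline.eventually_gt_atTop M).exists
  exact hs.not_ge (h s)

lemma half_mul_sq_le_sq_norm_of_mem_segment {x z : V} {R : ℝ} (hx : ‖x‖ = R) (hz : ‖z‖ = R)
    (hxz : ⟪x, z⟫_ℝ = 0) {y : V} (hy : y ∈ segment ℝ x z) : R ^ 2 / 2 ≤ ‖y‖ ^ 2 := by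
  obtain ⟨s, t, -, -, hst, rfl⟩ := hy
  have hnorm : ‖s • x + t • z‖ ^ 2 = (s ^ 2 + t ^ 2) * R ^ 2 := by
    rw [norm_add_sq_real, norm_smul, norm_smul, inner_smul_left, inner_smul_right, hxz, hx, hz,
      mul_pow, mul_pow, Real.norm_eq_abs, Real.norm_eq_abs, sq_abs, sq_abs]
    ring
  have hcoef : 1 / 2 ≤ s ^ 2 + t ^ 2 := by nlinarith [sq_nonneg (s - t)]
  nlinarith [sq_nonneg R]

lemma norm_sub_le_of_sq_mul_norm_fderiv_le {F : Type*} [NormedAddCommGroup F] [NormedSpace ℝ F]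
    {f : V → F} (hf : Differentiable ℝ f) {C R : ℝ} (hC : 0 ≤ C) (hR : 0 < R)
    (hdecay : ∀ y, R / 2 ≤ ‖y‖ → ‖y‖ ^ 2 * ‖fderiv ℝ f y‖ ≤ C) {x z : V} (hx : ‖x‖ = R)
    (hz : ‖z‖ = R) (hxz : ⟪x, z⟫_ℝ = 0) : ‖f z - f x‖ ≤ 4 * C / R := by
  have hderiv (y) (hy : y ∈ segment ℝ x z) : ‖fderiv ℝ f y‖ ≤ 2 * C / R ^ 2 := by
    have hnorm := half_mul_sq_le_sq_norm_of_mem_segment hx hz hxz hy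
    have hdecay_y := hdecay y (abs_le_of_sq_le_sq' (by nlinarith) (norm_nonneg y)).2
    rw [le_div_iff₀ (by positivity)]
    nlinarith [mul_le_mul_of_nonneg_right hnorm (norm_nonneg (fderiv ℝ f y))]
  have hdist : ‖z - x‖ ≤ 2 * R := by linarith [norm_sub_le z x]
  calc ‖f z - f x‖ ≤ 2 * C / R ^ 2 * ‖z - x‖ :=
        (convex_segment x z).norm_image_sub_le_of_norm_fderiv_le (fun y _ => hf y) hderiv
          (left_mem_segment ℝ x z) (right_mem_segment ℝ x z)
    _ ≤ 2 * C / R ^ 2 * (2 * R) := by gcongr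
    _ = 4 * C / R := by field_simp; ring

variable [FiniteDimensional ℝ V]

lemma inner_eq_zero_of_forall_add_ne_zero {B : V →L[ℝ] V} (hB : B ∈ conformalAlgebra V) {c : V}
    (hc : ∀ x, B x + c ≠ 0) (x : V) : ⟪B x, x⟫_ℝ = 0 := by
  by_contra hx
  have hx₀ : x ≠ 0 := fun h => hx (by rw [h, inner_zero_right])
  have hμ := inner_add_inner_of_mem_conformalAlgebra hB (norm_smul_inv_norm (𝕜 := ℝ) hx₀)
  have hμ₀ : ⟪B (((‖x‖⁻¹ : ℝ)) • x), (‖x‖⁻¹ : ℝ) • x⟫_ℝ ≠ 0 := by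
    rw [map_smul, real_inner_smul_left, real_inner_smul_right]
    exact mul_ne_zero (inv_ne_zero (norm_ne_zero_iff.2 hx₀))
      (mul_ne_zero (inv_ne_zero (norm_ne_zero_iff.2 hx₀)) hx)
  have hinj : Function.Injective B.toLinearMap := by
    refine (injective_iff_map_eq_zero _).2 fun u hu => ?_
    have hself := hμ u u
    rw [show B u = 0 from hu, inner_zero_left, add_zero, zero_eq_mul] at hself
    exact inner_self_eq_zero.1 (hself.resolve_left (mul_ne_zero two_ne_zero hμ₀))
  obtain ⟨y, hy⟩ := LinearMap.surjective_of_injective hinj (-c)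
  exact hc y (by rw [show B y = -c from hy, neg_add_cancel])

lemma fderiv_pullback_const {f : V → V} (hf : Conformal f) (e x : V) :
    fderiv ℝ f x (VectorField.pullback ℝ f (fun _ => e) x) = e := by
  obtain ⟨L, hL⟩ := exists_equiv_of_isConformalMap (isConformalMap_fderiv hf x)
  rw [VectorField.pullback, ← hL, ContinuousLinearMap.inverse_equiv]
  exact L.apply_symm_apply e

lemma norm_fderiv_mul_norm_pullback_const {f : V → V} (hf : Conformal f) (e x : V) :
    ‖fderiv ℝ f x‖ * ‖VectorField.pullback ℝ f (fun _ => e) x‖ = ‖e‖ := by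
  rw [← norm_isConformalMap_apply (isConformalMap_fderiv hf x), fderiv_pullback_const hf]

lemma norm_sub_le_of_forall_norm_eq {f : V → V} (hf : Conformal f) (q : V) {R M : ℝ} (hM : 0 ≤ M)
    (hfM : ∀ x, ‖x‖ = R → ‖f x - q‖ ≤ M) {x : V} (hx : ‖x‖ ≤ R) : ‖f x - q‖ ≤ M := by
  have hcont : Continuous fun x => ‖f x - q‖ ^ 2 :=
    ((hf.differentiable.continuous.sub continuous_const).norm).pow 2
  obtain ⟨m, hm, hmax⟩ := (isCompact_closedBall (0 : V) R).exists_isMaxOn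
    ⟨x, mem_closedBall_zero_iff.2 hx⟩ hcont.continuousOn
  refine le_trans ((sq_le_sq₀ (norm_nonneg _) (norm_nonneg _)).1
    (hmax (mem_closedBall_zero_iff.2 hx))) ?_
  rcases (mem_closedBall_zero_iff.1 hm).lt_or_eq with hlt | heq
  · have hcrit := (hmax.isLocalMax
      (closedBall_mem_nhds_of_mem (mem_ball_zero_iff.2 hlt))).fderiv_eq_zero
    have hderiv : HasFDerivAt (fun x => f x - q) (fderiv ℝ f m) m :=
      ((hf.differentiable m).hasFDerivAt).sub_const q
    rw [hderiv.norm_sq.fderiv] at hcrit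
    have hself := DFunLike.congr_fun hcrit (VectorField.pullback ℝ f (fun _ => f m - q) m)
    simp only [smul_apply, ContinuousLinearMap.comp_apply, innerSL_apply_apply,
      fderiv_pullback_const hf, zero_apply, smul_eq_zero, OfNat.ofNat_ne_zero,
      inner_self_eq_zero, false_or] at hself
    rw [hself, norm_zero]
    exact hM
  · exact hfM m heq

lemma norm_sub_le_of_sq_mul_norm_fderiv_le_of_conformal (hV : 3 ≤ Module.finrank ℝ V) {f : V → V}
    (hf : Conformal f) {C R : ℝ} (hC : 0 ≤ C) (hR : 0 < R)
    (hdecay : ∀ y, R / 2 ≤ ‖y‖ → ‖y‖ ^ 2 * ‖fderiv ℝ f y‖ ≤ C) {x : V} (hx : ‖x‖ ≤ R) :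
    ‖f x - f 0‖ ≤ 16 * C / R := by
  have hscale {z : V} (hz : ‖z‖ = 1) : ‖R • z‖ = R := by
    rw [norm_smul, hz, mul_one, Real.norm_of_nonneg hR.le]
  obtain ⟨p, hp, -⟩ := exists_unit_orthogonal_pair hV 0 0
  have hsphere (y : V) (hy : ‖y‖ = R) : ‖f y - f (R • p)‖ ≤ 8 * C / R := by
    obtain ⟨z, hz, hpz, hyz⟩ := exists_unit_orthogonal_pair hV p y
    have hzy := norm_sub_le_of_sq_mul_norm_fderiv_le hf.differentiable hC hR hdecay hy (hscale hz)
      (by rw [inner_smul_right, hyz, mul_zero])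
    have hzp := norm_sub_le_of_sq_mul_norm_fderiv_le hf.differentiable hC hR hdecay (hscale hp)
      (hscale hz) (by rw [inner_smul_right, inner_smul_left, hpz, mul_zero, mul_zero])
    calc ‖f y - f (R • p)‖ ≤ ‖f y - f (R • z)‖ + ‖f (R • z) - f (R • p)‖ :=
          norm_sub_le_norm_sub_add_norm_sub _ _ _
      _ ≤ 4 * C / R + 4 * C / R := add_le_add (by rwa [norm_sub_rev]) hzp
      _ = 8 * C / R := by ring
  have hball {y : V} (hy : ‖y‖ ≤ R) := norm_sub_le_of_forall_norm_eq hf _ (by positivity) hsphere hy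
  calc ‖f x - f 0‖ ≤ ‖f x - f (R • p)‖ + ‖f (R • p) - f 0‖ :=
        norm_sub_le_norm_sub_add_norm_sub _ _ _
    _ ≤ 8 * C / R + 8 * C / R :=
        add_le_add (hball hx) (by rw [norm_sub_rev]; exact hball (by rw [norm_zero]; exact hR.le))
    _ = 16 * C / R := by ring

-- Otherwise `f` would extend continuously to the one-point compactification of `V`.
lemma not_eventually_sq_mul_norm_fderiv_le (hV : 3 ≤ Module.finrank ℝ V) {f : V → V}
    (hf : Conformal f) (C : ℝ) :
    ¬ ∀ᶠ R in atTop, ∀ y : V, R ≤ ‖y‖ → ‖y‖ ^ 2 * ‖fderiv ℝ f y‖ ≤ C := by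
  intro hdecay
  have hlim : Tendsto (fun R : ℝ => 16 * |C| / R) atTop (𝓝 0) :=
    tendsto_const_nhds.div_atTop tendsto_id
  have hconst (x : V) : f x = f 0 := by
    refine sub_eq_zero.1 (norm_le_zero_iff.1 (ge_of_tendsto hlim ?_))
    filter_upwards [(tendsto_id.atTop_div_const two_pos).eventually hdecay, eventually_gt_atTop 0,
      eventually_ge_atTop ‖x‖] with R hR hR₀ hxR
    exact norm_sub_le_of_sq_mul_norm_fderiv_le_of_conformal hV hf (abs_nonneg C) hR₀
      (fun y hy => (hR y hy).trans (le_abs_self C)) hxR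
  have : Nontrivial V := Module.nontrivial_of_finrank_pos (R := ℝ) (by omega)
  obtain ⟨e, he⟩ := exists_ne (0 : V)
  have hfderiv := fderiv_pullback_const hf e 0
  rw [funext hconst, fderiv_const_apply, zero_apply] at hfderiv
  exact he hfderiv.symm

lemma eventually_le_norm_conformalKillingField
    {p : conformalProlongation V × conformalAlgebra V × V} (hp : p.1 ≠ 0) :
    ∃ c > 0, ∀ᶠ R in atTop, ∀ x, R ≤ ‖x‖ → c * ‖x‖ ^ 2 ≤ ‖conformalKillingField p x‖ := by
  obtain ⟨b, hb⟩ := exists_eq_of_mem_conformalProlongation p.1.2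
  have hb₀ : 0 < ‖b‖ := by
    refine norm_pos_iff.2 fun h => hp (Subtype.ext ?_)
    ext u v
    simp only [hb, h, inner_zero_left, zero_smul, smul_zero, add_zero, sub_zero,
      ZeroMemClass.coe_zero, zero_apply]
  have hquad (x : V) : ‖p.1.1 x x‖ = ‖b‖ * ‖x‖ ^ 2 := by
    rw [hb, ← sq_eq_sq₀ (norm_nonneg _) (by positivity), ← real_inner_self_eq_norm_sq]
    simp only [inner_sub_left, inner_add_left, inner_sub_right, inner_add_right, inner_smul_left,
      inner_smul_right, real_inner_self_eq_norm_sq, conj_trivial, real_inner_comm b x]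
    ring
  refine ⟨‖b‖ / 4, by positivity, ?_⟩
  filter_upwards [eventually_ge_atTop 1,
    (tendsto_id.atTop_mul_const hb₀).eventually_ge_atTop (4 * (‖p.2.1.1‖ + ‖p.2.2‖))]
    with R hR₁ hR x hx
  have hlower : ‖p.2.1.1 x + p.2.2‖ ≤ ‖b‖ / 4 * ‖x‖ ^ 2 := by
    have hT : ‖p.2.1.1 x + p.2.2‖ ≤ ‖p.2.1.1‖ * ‖x‖ + ‖p.2.2‖ :=
      (norm_add_le _ _).trans (by gcongr; exact p.2.1.1.le_opNorm x)
    have hRx : R * ‖b‖ ≤ ‖x‖ * ‖b‖ := by gcongr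
    simp only [id_eq] at hR
    nlinarith [norm_nonneg p.2.2, norm_nonneg x]
  have hsub := norm_sub_le_norm_add ((2⁻¹ : ℝ) • p.1.1 x x) (p.2.1.1 x + p.2.2)
  rw [← add_assoc, ← conformalKillingField_apply, norm_smul, hquad,
    Real.norm_of_nonneg (by norm_num)] at hsub
  linarith

lemma pullback_const_quadratic_part_eq_zero (hV : 3 ≤ Module.finrank ℝ V) {f : V → V}
    (hf : Conformal f) {e : V} {p : conformalProlongation V × conformalAlgebra V × V}
    (hp : VectorField.pullback ℝ f (fun _ => e) = conformalKillingField p) : p.1 = 0 := by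
  by_contra hp₀
  obtain ⟨c, hc, hgrowth⟩ := eventually_le_norm_conformalKillingField hp₀
  refine not_eventually_sq_mul_norm_fderiv_le hV hf (‖e‖ / c) ?_
  filter_upwards [hgrowth] with R hR x hx
  have hlower := hR x hx
  rw [← hp] at hlower
  rw [le_div_iff₀ hc, ← norm_fderiv_mul_norm_pullback_const hf e x]
  nlinarith [mul_le_mul_of_nonneg_left hlower (norm_nonneg (fderiv ℝ f x))]

lemma exists_pullback_const_eq_add (hV : 3 ≤ Module.finrank ℝ V) {f : V → V}
    (hf : ContDiff ℝ 1 f) (hfc : Conformal f) (e : V) :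
    ∃ B : V →L[ℝ] V, (∀ x, e ≠ 0 → ⟪B x, x⟫_ℝ = 0) ∧
      ∀ x, VectorField.pullback ℝ f (fun _ => e) x =
        B x + VectorField.pullback ℝ f (fun _ => e) 0 := by
  borelize V
  obtain ⟨p, hp⟩ := exists_pullback_eq_conformalKillingField hV hf hfc e
  have hp₀ := pullback_const_quadratic_part_eq_zero hV hfc hp
  have haffine (x : V) : VectorField.pullback ℝ f (fun _ => e) x = p.2.1.1 x + p.2.2 := by
    rw [hp, conformalKillingField_apply, hp₀]
    simp only [ZeroMemClass.coe_zero, zero_apply, smul_zero, zero_add]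
  refine ⟨p.2.1.1, fun x he => inner_eq_zero_of_forall_add_ne_zero p.2.1.2 (c := p.2.2)
    (fun y hy => he ?_) x, fun x => ?_⟩
  · rw [← fderiv_pullback_const hfc e y, haffine, hy, map_zero]
  · rw [haffine, haffine 0, map_zero, zero_add]

lemma pullback_const_eq_of_pullback_const_eq {f : V → V} (hf : Conformal f)
    {B : V → V →L[ℝ] V} (hB : ∀ e x, VectorField.pullback ℝ f (fun _ => e) x =
      B e x + VectorField.pullback ℝ f (fun _ => e) 0)
    {e x : V} (he : e ≠ 0) (hBe : B e x = 0) (e' : V) :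
    VectorField.pullback ℝ f (fun _ => e') x = VectorField.pullback ℝ f (fun _ => e') 0 := by
  let Y (e : V) : V → V := VectorField.pullback ℝ f fun _ => e
  have hbound (s : ℝ) : ‖Y e' 0 + s • B e' x‖ ≤ ‖e'‖ * ‖Y e 0‖ / ‖e‖ := by
    have hscale := norm_fderiv_mul_norm_pullback_const hf e (s • x)
    rw [hB e (s • x), map_smul, hBe, smul_zero, zero_add] at hscale
    rw [le_div_iff₀ (norm_pos_iff.2 he), ← hscale,
      ← norm_fderiv_mul_norm_pullback_const hf e' (s • x), hB e' (s • x), map_smul,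
      add_comm (Y e' 0)]
    exact le_of_eq (by ring)
  rw [hB e' x, eq_zero_of_forall_norm_add_smul_le hbound, zero_add]

-- For fixed `x` the difference of the inverse derivatives at `x` and `0` maps into the orthogonal
-- complement of `x`, so it kills some `e ≠ 0`; then `‖f'‖` is constant on the line `ℝ x`.
theorem fderiv_eq_of_conformal_of_three_le (hV : 3 ≤ Module.finrank ℝ V) {f : V → V}
    (hf : ContDiff ℝ 1 f) (hfc : Conformal f) (x : V) : fderiv ℝ f x = fderiv ℝ f 0 := by
  rcases eq_or_ne x 0 with rfl | hx
  · rfl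
  choose B hBskew hB using exists_pullback_const_eq_add hV hf hfc
  let D : V →L[ℝ] V := (fderiv ℝ f x).inverse - (fderiv ℝ f 0).inverse
  have hD (e : V) : D e = B e x := sub_eq_of_eq_add (hB e x)
  have hnot : ¬ Function.Injective D.toLinearMap := fun hinj => by
    obtain ⟨e, he : D e = x⟩ := LinearMap.surjective_of_injective hinj x
    have he₀ : e ≠ 0 := by
      rintro rfl
      exact hx (by rw [← he, map_zero])
    have hself := hBskew e x he₀
    rw [← hD, he] at hself
    exact hx (inner_self_eq_zero.1 hself)
  rw [injective_iff_map_eq_zero] at hnot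
  push Not at hnot
  obtain ⟨e, hDe : D e = 0, he⟩ := hnot
  have hinv : (fderiv ℝ f x).inverse = (fderiv ℝ f 0).inverse := by
    ext1 e'
    exact pullback_const_eq_of_pullback_const_eq hfc hB he ((hD e).symm.trans hDe) e'
  obtain ⟨L, hL⟩ := exists_equiv_of_isConformalMap (isConformalMap_fderiv hfc x)
  obtain ⟨L₀, hL₀⟩ := exists_equiv_of_isConformalMap (isConformalMap_fderiv hfc 0)
  rw [← hL, ← hL₀, ContinuousLinearMap.inverse_equiv, ContinuousLinearMap.inverse_equiv] at hinv
  rw [← hL, ← hL₀, ← L.symm_symm, ← L₀.symm_symm, ContinuousLinearEquiv.coe_injective hinv]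

end ConformalRigidity

section ConformalRigidityInThePlane

open Complex

lemma fderiv_eq_of_differentiable_of_norm_fderiv_le {f : ℂ → ℂ} (hf : Differentiable ℂ f) {C : ℝ}
    (hC : ∀ z, ‖fderiv ℝ f z‖ ≤ C) (z : ℂ) : fderiv ℝ f z = fderiv ℝ f 0 := by
  have hreal (z) : fderiv ℝ f z = (fderiv ℂ f z).restrictScalars ℝ :=
    (hf z).fderiv_restrictScalars ℝ
  have hbounded : Bornology.IsBounded (Set.range (deriv f)) := by
    refine isBounded_iff_forall_norm_le.2 ⟨C, ?_⟩
    rintro _ ⟨z, rfl⟩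
    rw [norm_deriv_eq_norm_fderiv, ← ContinuousLinearMap.norm_restrictScalars (𝕜' := ℝ), ← hreal]
    exact hC z
  rw [hreal, hreal, ← toSpanSingleton_deriv, ← toSpanSingleton_deriv,
    hf.deriv.apply_eq_apply_of_bounded hbounded z 0]

lemma apply_I_eq_or_eq_neg_of_isConformalMap {L : ℂ →L[ℝ] ℂ} (hL : IsConformalMap L) :
    L I = I * L 1 ∨ L I = -(I * L 1) := by
  refine hL.is_complex_or_conj_linear.imp ?_ ?_
  · rintro ⟨M, rfl⟩
    simpa using M.map_smul I 1
  · rintro ⟨M, hM⟩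
    have hconj (z : ℂ) : L z = M (conjCLE z) := by
      simpa using (DFunLike.congr_fun hM (conjCLE z)).symm
    simpa [hconj] using M.map_smul I 1

lemma differentiable_or_differentiable_conj_comp {f : ℂ → ℂ} (hf : ContDiff ℝ 1 f)
    (hfc : Conformal f) : Differentiable ℂ f ∨ Differentiable ℂ (conjCLE ∘ f) := by
  have hcont (v : ℂ) : Continuous fun z => fderiv ℝ f z v :=
    (hf.continuous_fderiv one_ne_zero).clm_apply continuous_const
  have hclosed : IsClosed {z | fderiv ℝ f z I = I * fderiv ℝ f z 1} :=
    isClosed_eq (hcont _) (continuous_const.mul (hcont _))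
  have hclosed_conj : IsClosed {z | fderiv ℝ f z I = -(I * fderiv ℝ f z 1)} :=
    isClosed_eq (hcont _) (continuous_const.mul (hcont _)).neg
  have hcover (z : ℂ) := apply_I_eq_or_eq_neg_of_isConformalMap (isConformalMap_fderiv hfc z)
  have hdisjoint : Disjoint {z | fderiv ℝ f z I = I * fderiv ℝ f z 1}
      {z | fderiv ℝ f z I = -(I * fderiv ℝ f z 1)} := by
    refine Set.disjoint_left.2 fun z (hz : _ = _) (hz' : _ = _) => I_ne_zero ?_
    refine (isConformalMap_fderiv hfc z).injective ?_
    rw [map_zero]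
    linear_combination (2⁻¹ : ℂ) * (hz + hz')
  rcases (isPreconnected_iff_subset_of_fully_disjoint_closed isClosed_univ).1
    (isPreconnected_univ (α := ℂ)) _ _ hclosed hclosed_conj (fun z _ => hcover z) hdisjoint
    with h | h
  · exact Or.inl fun z => differentiableAt_complex_iff_differentiableAt_real.2
      ⟨hfc.differentiable z, h (Set.mem_univ z)⟩
  · refine Or.inr fun z => differentiableAt_complex_iff_differentiableAt_real.2
      ⟨conjCLE.differentiable.comp hfc.differentiable z, ?_⟩
    have hz : fderiv ℝ f z I = -(I * fderiv ℝ f z 1) := h (Set.mem_univ z)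
    rw [conjCLE.comp_fderiv]
    simp [hz]

lemma fderiv_eq_of_conformal_complex {f : ℂ → ℂ} (hf : ContDiff ℝ 1 f) (hfc : Conformal f) {C : ℝ}
    (hC : ∀ z, ‖fderiv ℝ f z‖ ≤ C) (z : ℂ) : fderiv ℝ f z = fderiv ℝ f 0 := by
  rcases differentiable_or_differentiable_conj_comp hf hfc with hf' | hf'
  · exact fderiv_eq_of_differentiable_of_norm_fderiv_le hf' hC z
  · have hconj (z : ℂ) : fderiv ℝ (conjCLE ∘ f) z = (conjCLE : ℂ →L[ℝ] ℂ).comp (fderiv ℝ f z) :=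
      conjCLE.comp_fderiv
    have hnorm (z : ℂ) : ‖fderiv ℝ (conjCLE ∘ f) z‖ ≤ C := by
      rw [hconj]
      exact (conjLIE.toLinearIsometry.norm_toContinuousLinearMap_comp).trans_le (hC z)
    have heq := fderiv_eq_of_differentiable_of_norm_fderiv_le hf' hnorm z
    rw [hconj, hconj] at heq
    ext1 v
    exact conjCLE.injective (DFunLike.congr_fun heq v)

theorem fderiv_eq_of_conformal_of_finrank_eq_two {V : Type*} [NormedAddCommGroup V]
    [InnerProductSpace ℝ V] (hV : Module.finrank ℝ V = 2) {f : V → V} (hf : ContDiff ℝ 1 f)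
    (hfc : Conformal f) {C : ℝ} (hC : ∀ x, ‖fderiv ℝ f x‖ ≤ C) (x : V) :
    fderiv ℝ f x = fderiv ℝ f 0 := by
  have : FiniteDimensional ℝ V := Module.finite_of_finrank_eq_succ hV
  let ι : ℂ ≃ₗᵢ[ℝ] V :=
    orthonormalBasisOneI.equiv (stdOrthonormalBasis ℝ V) (finCongr hV.symm)
  have hι : Conformal ι := fun z =>
    ⟨_, ι.toContinuousLinearEquiv.hasFDerivAt, ι.toLinearIsometry.isConformalMap⟩
  have hι' : Conformal ι.symm := fun z =>
    ⟨_, ι.symm.toContinuousLinearEquiv.hasFDerivAt, ι.symm.toLinearIsometry.isConformalMap⟩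
  have hfderiv (z : ℂ) : fderiv ℝ (ι.symm ∘ f ∘ ι) z =
      ι.symm.toLinearIsometry.toContinuousLinearMap ∘L
        fderiv ℝ f (ι z) ∘L ι.toLinearIsometry.toContinuousLinearMap :=
    (ι.symm.toContinuousLinearEquiv.hasFDerivAt.comp z
      ((hfc.differentiable (ι z)).hasFDerivAt.comp z ι.toContinuousLinearEquiv.hasFDerivAt)).fderiv
  have hnorm (z : ℂ) : ‖fderiv ℝ (ι.symm ∘ f ∘ ι) z‖ ≤ C := by
    rw [hfderiv, LinearIsometry.norm_toContinuousLinearMap_comp]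
    exact (ContinuousLinearMap.opNorm_comp_linearIsometryEquiv _ ι).trans_le (hC (ι z))
  have heq := fderiv_eq_of_conformal_complex (ι.symm.contDiff.comp (hf.comp ι.contDiff))
    ((hι.comp hfc).comp hι') hnorm (ι.symm x)
  rw [hfderiv, hfderiv] at heq
  ext v
  simpa using DFunLike.congr_fun heq (ι.symm v)

end ConformalRigidityInThePlane

section MeanValue

variable {V : Type*} [NormedAddCommGroup V] [InnerProductSpace ℝ V] [FiniteDimensional ℝ V]

lemma eq_zero_of_inner_eq_zero_of_finrank_le_one (hV : Module.finrank ℝ V ≤ 1) {u v : V}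
    (hv : v ≠ 0) (huv : ⟪v, u⟫_ℝ = 0) : u = 0 := by
  obtain ⟨e, he⟩ := finrank_le_one_iff.1 hV
  obtain ⟨s, rfl⟩ := he u
  obtain ⟨t, rfl⟩ := he v
  simp_all [real_inner_smul_left, real_inner_smul_right]

lemma exists_mem_segment_sub_eq_fderiv_of_finrank_le_one (hV : Module.finrank ℝ V ≤ 1) {f : V → V}
    (hf : Differentiable ℝ f) (p q : V) :
    ∃ ξ ∈ segment ℝ p q, f q - f p = fderiv ℝ f ξ (q - p) := by
  obtain ⟨ξ, hξ, hmean⟩ := domain_mvt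
    (fun x _ => ((innerSL ℝ (q - p)).hasFDerivAt.comp x (hf x).hasFDerivAt).hasFDerivWithinAt)
    convex_univ (Set.mem_univ p) (Set.mem_univ q)
  refine ⟨ξ, hξ, ?_⟩
  rcases eq_or_ne p q with rfl | hpq
  · simp
  refine sub_eq_zero.1 (eq_zero_of_inner_eq_zero_of_finrank_le_one hV (sub_ne_zero.2 hpq.symm) ?_)
  rw [inner_sub_right, inner_sub_right, sub_eq_zero]
  exact hmean

lemma sub_eq_apply_of_fderiv_eq {F G : Type*} [NormedAddCommGroup F] [NormedSpace ℝ F]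
    [NormedAddCommGroup G] [NormedSpace ℝ G] {f : F → G} {L : F →L[ℝ] G}
    (hf : Differentiable ℝ f) (hL : ∀ x, fderiv ℝ f x = L) (p q : F) :
    f q - f p = L (q - p) := by
  have h := convex_univ.norm_image_sub_le_of_norm_fderiv_le' (C := 0) (φ := L)
    (fun x _ => hf x) (fun x _ => by simp [hL]) (Set.mem_univ p) (Set.mem_univ q)
  rwa [zero_mul, norm_le_zero_iff, sub_eq_zero] at h

/-- In dimension at most one this is the scalar mean value theorem; in higher dimensions rigidity
makes the derivative constant. -/
theorem exists_mem_segment_sub_eq_fderiv_of_conformal {f : V → V} (hf : ContDiff ℝ 1 f)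
    (hfc : Conformal f) {C : ℝ} (hC : ∀ x, ‖fderiv ℝ f x‖ ≤ C) (p q : V) :
    ∃ ξ ∈ segment ℝ p q, f q - f p = fderiv ℝ f ξ (q - p) := by
  have of_constant (hconst : ∀ x, fderiv ℝ f x = fderiv ℝ f 0) :
      ∃ ξ ∈ segment ℝ p q, f q - f p = fderiv ℝ f ξ (q - p) :=
    ⟨p, left_mem_segment ℝ p q, by
      rw [hconst p, sub_eq_apply_of_fderiv_eq hfc.differentiable hconst]⟩
  rcases le_or_gt (Module.finrank ℝ V) 1 with hV | hV
  · exact exists_mem_segment_sub_eq_fderiv_of_finrank_le_one hV hfc.differentiable p q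
  rcases eq_or_lt_of_le (Nat.succ_le_of_lt hV) with hV | hV
  · exact of_constant (fderiv_eq_of_conformal_of_finrank_eq_two hV.symm hf hfc hC)
  · exact of_constant (fderiv_eq_of_conformal_of_three_le hV hf hfc)

end MeanValue

section Words

variable {V A : Type*} {φ : A → V → V} {X : Set V}

lemma listMap_append (φ : A → V → V) (w u : List A) (x : V) :
    listMap φ (w ++ u) x = listMap φ w (listMap φ u x) := by
  induction w with
  | nil => rfl
  | cons a w ih => exact congrArg (φ a) ih

lemma listMap_append_image (φ : A → V → V) (w u : List A) (X : Set V) :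
    listMap φ (w ++ u) '' X = listMap φ w '' (listMap φ u '' X) := by
  rw [Set.image_image]
  exact Set.image_congr fun x _ => listMap_append φ w u x

lemma mapsTo_listMap (hX : ∀ a, Set.MapsTo (φ a) X X) (w : List A) :
    Set.MapsTo (listMap φ w) X X := by
  induction w with
  | nil => exact Set.mapsTo_id X
  | cons a w ih => exact (hX a).comp ih

variable [NormedAddCommGroup V]

lemma norm_listMap_sub_le {r : ℝ} (hr : 0 ≤ r) (hφ : ∀ a x y, ‖φ a x - φ a y‖ ≤ r * ‖x - y‖)
    (w : List A) (x y : V) : ‖listMap φ w x - listMap φ w y‖ ≤ r ^ w.length * ‖x - y‖ := by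
  induction w with
  | nil => simp [listMap]
  | cons a w ih =>
    calc ‖φ a (listMap φ w x) - φ a (listMap φ w y)‖
        ≤ r * ‖listMap φ w x - listMap φ w y‖ := hφ a _ _
      _ ≤ r * (r ^ w.length * ‖x - y‖) := by gcongr
      _ = r ^ (a :: w).length * ‖x - y‖ := by rw [List.length_cons, pow_succ']; ring

end Words

section Distortion

/-- On `S`, the map `f` agrees with a similarity up to a factor `exp δ`. Measuring distortion on a
logarithmic scale makes it additive under composition. -/
def HasDistortionAtMost {V : Type*} [PseudoMetricSpace V] (δ : ℝ) (f : V → V) (S : Set V) : Prop :=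
  ∃ l > 0, ∀ x ∈ S, ∀ y ∈ S, Real.exp (-δ) * (l * dist x y) ≤ dist (f x) (f y) ∧
    dist (f x) (f y) ≤ Real.exp δ * (l * dist x y)

namespace HasDistortionAtMost

variable {V : Type*} [PseudoMetricSpace V] {f g : V → V} {S : Set V} {δ δ' : ℝ}

lemma mono_left (hf : HasDistortionAtMost δ f S) (hδ : δ ≤ δ') : HasDistortionAtMost δ' f S := by
  obtain ⟨l, hl, h⟩ := hf
  refine ⟨l, hl, fun x hx y hy => ⟨le_trans ?_ (h x hx y hy).1, (h x hx y hy).2.trans ?_⟩⟩ <;>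
    gcongr

lemma mono_right {T : Set V} (hf : HasDistortionAtMost δ f T) (hST : S ⊆ T) :
    HasDistortionAtMost δ f S := by
  obtain ⟨l, hl, h⟩ := hf
  exact ⟨l, hl, fun x hx y hy => h x (hST hx) y (hST hy)⟩

lemma comp (hf : HasDistortionAtMost δ f (g '' S)) (hg : HasDistortionAtMost δ' g S) :
    HasDistortionAtMost (δ' + δ) (f ∘ g) S := by
  obtain ⟨l, hl, hf⟩ := hf
  obtain ⟨l', hl', hg⟩ := hg
  refine ⟨l * l', by positivity, fun x hx y hy => ?_⟩
  obtain ⟨hf₁, hf₂⟩ := hf _ (Set.mem_image_of_mem g hx) _ (Set.mem_image_of_mem g hy)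
  obtain ⟨hg₁, hg₂⟩ := hg x hx y hy
  constructor
  · calc Real.exp (-(δ' + δ)) * (l * l' * dist x y)
        = Real.exp (-δ) * (l * (Real.exp (-δ') * (l' * dist x y))) := by
          rw [neg_add, Real.exp_add]; ring
      _ ≤ Real.exp (-δ) * (l * dist (g x) (g y)) := by gcongr
      _ ≤ dist (f (g x)) (f (g y)) := hf₁
  · calc dist (f (g x)) (f (g y)) ≤ Real.exp δ * (l * dist (g x) (g y)) := hf₂
      _ ≤ Real.exp δ * (l * (Real.exp δ' * (l' * dist x y))) := by gcongr
      _ = Real.exp (δ' + δ) * (l * l' * dist x y) := by rw [Real.exp_add]; ring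

end HasDistortionAtMost

lemma hasDistortionAtMost_listMap {V A : Type*} [PseudoMetricSpace V] {φ : A → V → V} {S : Set V}
    {t : ℕ → ℝ} (ht₀ : ∀ n, 0 ≤ t n) (ht : Summable t)
    (hφ : ∀ a w, HasDistortionAtMost (t w.length) (φ a) (listMap φ w '' S)) (w : List A) :
    HasDistortionAtMost (∑' n, t n) (listMap φ w) S := by
  have hpartial : HasDistortionAtMost (∑ n ∈ Finset.range w.length, t n) (listMap φ w) S := by
    induction w with
    | nil => exact ⟨1, one_pos, fun x _ y _ => by simp [listMap]⟩
    | cons a w ih =>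
      rw [List.length_cons, Finset.sum_range_succ]
      exact (hφ a w).comp ih
  exact hpartial.mono_left (ht.sum_le_tsum _ fun n _ => ht₀ n)

end Distortion

section ConformalDistortion

variable {V : Type*} [NormedAddCommGroup V] [InnerProductSpace ℝ V] [FiniteDimensional ℝ V]

lemma le_exp_mul_of_abs_sub_le {a b m δ : ℝ} (hm : 0 ≤ m) (hb : m ≤ b) (hδ : 0 ≤ δ)
    (hab : |a - b| ≤ δ * m) : a ≤ Real.exp δ * b := by
  calc a ≤ b + δ * m := by linarith [le_abs_self (a - b)]
    _ ≤ (δ + 1) * b := by linarith [mul_le_mul_of_nonneg_left hb hδ]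
    _ ≤ Real.exp δ * b := by gcongr; exacts [hm.trans hb, Real.add_one_le_exp δ]

lemma hasDistortionAtMost_of_conformal {f : V → V} (hf : ContDiff ℝ 1 f) (hfc : Conformal f)
    {C : ℝ} (hC : ∀ x, ‖fderiv ℝ f x‖ ≤ C) {S : Set V} (hS : Convex ℝ S) {m δ : ℝ} (hm : 0 < m)
    (hδ : 0 ≤ δ) (hmin : ∀ x ∈ S, m ≤ ‖fderiv ℝ f x‖)
    (hosc : ∀ x ∈ S, ∀ y ∈ S, |‖fderiv ℝ f x‖ - ‖fderiv ℝ f y‖| ≤ δ * m) :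
    HasDistortionAtMost δ f S := by
  rcases S.eq_empty_or_nonempty with rfl | ⟨z, hz⟩
  · exact ⟨1, one_pos, by simp⟩
  refine ⟨‖fderiv ℝ f z‖, hm.trans_le (hmin z hz), fun x hx y hy => ?_⟩
  obtain ⟨ξ, hξ, hmean⟩ := exists_mem_segment_sub_eq_fderiv_of_conformal hf hfc hC y x
  replace hξ : ξ ∈ S := hS.segment_subset hy hx hξ
  rw [dist_eq_norm, dist_eq_norm, hmean, norm_isConformalMap_apply (isConformalMap_fderiv hfc ξ),
    ← mul_assoc, ← mul_assoc, Real.exp_neg]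
  refine ⟨?_, ?_⟩ <;> gcongr
  · rw [inv_mul_le_iff₀ (Real.exp_pos δ)]
    exact le_exp_mul_of_abs_sub_le hm.le (hmin ξ hξ) hδ (hosc z hz ξ hξ)
  · exact le_exp_mul_of_abs_sub_le hm.le (hmin z hz) hδ (hosc ξ hξ z hz)

lemma exists_pos_forall_le_norm_fderiv {F G A : Type*} [NormedAddCommGroup F] [NormedSpace ℝ F]
    [NormedAddCommGroup G] [NormedSpace ℝ G] [Nontrivial F] [Finite A] {φ : A → F → G}
    (hφ : ∀ a, ContDiff ℝ 1 (φ a)) (hφc : ∀ a, Conformal (φ a)) {S : Set F} (hS : IsCompact S) :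
    ∃ m > 0, ∀ a, ∀ x ∈ S, m ≤ ‖fderiv ℝ (φ a) x‖ := by
  have hpos (a : A) (x : F) : 0 < ‖fderiv ℝ (φ a) x‖ := by
    obtain ⟨v, hv⟩ := exists_ne (0 : F)
    have hinj := (conformalAt_iff_isConformalMap_fderiv.1 (hφc a x)).injective
    exact norm_pos_iff.2 fun h => hv (hinj (by simp [h]))
  have hmin (a : A) : ∃ m > 0, ∀ x ∈ S, m ≤ ‖fderiv ℝ (φ a) x‖ :=
    hS.exists_forall_le' ((hφ a).continuous_fderiv one_ne_zero).norm.continuousOn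
      fun x _ => hpos a x
  choose m hm₀ hm using hmin
  rcases isEmpty_or_nonempty A with _ | _
  · exact ⟨1, one_pos, isEmptyElim⟩
  obtain ⟨a₀, ha₀⟩ := Finite.exists_min m
  exact ⟨m a₀, hm₀ a₀, fun a x hx => (ha₀ a).trans (hm a x hx)⟩

lemma exists_uniform_contraction {F A : Type*} [NormedAddCommGroup F] [Finite A] {φ : A → F → F}
    (hφ : ∀ a, ∃ r, IsContractionWith r (φ a)) :
    ∃ r, 0 ≤ r ∧ r < 1 ∧ ∀ a x y, ‖φ a x - φ a y‖ ≤ r * ‖x - y‖ := by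
  rcases isEmpty_or_nonempty A with _ | _
  · exact ⟨0, le_rfl, one_pos, isEmptyElim⟩
  choose r hr₀ hr₁ hr using hφ
  obtain ⟨a₀, ha₀⟩ := Finite.exists_max r
  exact ⟨r a₀, (hr₀ a₀).le, hr₁ a₀, fun a x y => (hr a x y).trans (by gcongr; exact ha₀ a)⟩

lemma norm_sub_le_of_mem_convexHull_listMap_image {F A : Type*} [NormedAddCommGroup F]
    [NormedSpace ℝ F] {φ : A → F → F} {r : ℝ} (hr : 0 ≤ r)
    (hφ : ∀ a x y, ‖φ a x - φ a y‖ ≤ r * ‖x - y‖) {X : Set F} (hXb : Bornology.IsBounded X)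
    (w : List A) {x y : F} (hx : x ∈ convexHull ℝ (listMap φ w '' X))
    (hy : y ∈ convexHull ℝ (listMap φ w '' X)) : ‖x - y‖ ≤ r ^ w.length * diam X := by
  obtain ⟨_, ⟨p, hp, rfl⟩, _, ⟨q, hq, rfl⟩, hpq⟩ := convexHull_exists_dist_ge2 hx hy
  calc ‖x - y‖ ≤ ‖listMap φ w p - listMap φ w q‖ := by simpa only [dist_eq_norm] using hpq
    _ ≤ r ^ w.length * ‖p - q‖ := norm_listMap_sub_le hr hφ w p q
    _ ≤ r ^ w.length * diam X := by
      rw [← dist_eq_norm]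
      gcongr
      exact dist_le_diam_of_mem hXb hp hq

theorem exists_hasDistortionAtMost_listMap {A : Type*} [Finite A] {φ : A → V → V}
    (hφcontr : ∀ a, ∃ r, IsContractionWith r (φ a)) (hφ : ∀ a, ContDiff ℝ 1 (φ a))
    (hφc : ∀ a, Conformal (φ a)) {H α : ℝ} (hH : 0 ≤ H) (hα : 0 < α)
    (hHölder : ∀ a x y, |‖fderiv ℝ (φ a) x‖ - ‖fderiv ℝ (φ a) y‖| ≤ H * ‖x - y‖ ^ α)
    {X : Set V} (hXb : Bornology.IsBounded X) (hX : ∀ a, Set.MapsTo (φ a) X X) :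
    ∃ δ, ∀ w, HasDistortionAtMost δ (listMap φ w) X := by
  rcases subsingleton_or_nontrivial V with _ | _
  · exact ⟨0, fun w => ⟨1, one_pos, fun x _ y _ => by simp [Subsingleton.elim x y]⟩⟩
  obtain ⟨r, hr₀, hr₁, hr⟩ := exists_uniform_contraction hφcontr
  have hC (a : A) (x : V) : ‖fderiv ℝ (φ a) x‖ ≤ r :=
    norm_fderiv_le_of_lip' ℝ hr₀ (Eventually.of_forall fun y => hr a y x)
  obtain ⟨R, hR⟩ := hXb.subset_closedBall 0
  obtain ⟨m, hm₀, hm⟩ := exists_pos_forall_le_norm_fderiv hφ hφc (isCompact_closedBall (0 : V) R)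
  have hsummable : Summable fun n => H * diam X ^ α / m * (r ^ α) ^ n :=
    (summable_geometric_of_lt_one (by positivity) (Real.rpow_lt_one hr₀ hr₁ hα)).mul_left _
  refine ⟨_, hasDistortionAtMost_listMap (fun n => by positivity) hsummable fun a w => ?_⟩
  refine HasDistortionAtMost.mono_right ?_ (subset_convexHull ℝ (listMap φ w '' X))
  refine hasDistortionAtMost_of_conformal (hφ a) (hφc a) (hC a) (convex_convexHull ℝ _) hm₀
    (by positivity) (fun x hx => hm a x ?_) fun x hx y hy => ?_
  · exact convexHull_min (((mapsTo_listMap hX w).image_subset).trans hR) (convex_closedBall 0 R) hx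
  · calc |‖fderiv ℝ (φ a) x‖ - ‖fderiv ℝ (φ a) y‖| ≤ H * ‖x - y‖ ^ α := hHölder a x y
      _ ≤ H * (r ^ w.length * diam X) ^ α := by
        gcongr
        exact norm_sub_le_of_mem_convexHull_listMap_image hr₀ hr hXb w hx hy
      _ = H * diam X ^ α / m * (r ^ α) ^ w.length * m := by
        rw [Real.mul_rpow (by positivity) diam_nonneg, ← Real.rpow_pow_comm hr₀]
        field_simp

end ConformalDistortion

section Separation

variable {V A : Type*} [NormedAddCommGroup V]

lemma setDist_le_dist {S T : Set V} {p q : V} (hp : p ∈ S) (hq : q ∈ T) :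
    setDist S T ≤ dist p q :=
  csInf_le ⟨0, by rintro _ ⟨s, _, t, _, rfl⟩; exact dist_nonneg⟩ (Set.mem_image2_of_mem hp hq)

lemma le_setDist {S T : Set V} {c : ℝ} (hS : S.Nonempty) (hT : T.Nonempty)
    (h : ∀ p ∈ S, ∀ q ∈ T, c ≤ dist p q) : c ≤ setDist S T :=
  le_csInf (hS.image2 hT) (by rintro _ ⟨s, hs, t, ht, rfl⟩; exact h s hs t ht)

lemma setDist_anti {S S' T T' : Set V} (hS : S.Nonempty) (hT : T.Nonempty) (hSS' : S ⊆ S')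
    (hTT' : T ⊆ T') : setDist S' T' ≤ setDist S T :=
  le_setDist hS hT fun _ hp _ hq => setDist_le_dist (hSS' hp) (hTT' hq)

lemma setDist_le_diam {S T U : Set V} (hS : S.Nonempty) (hT : T.Nonempty) (hSU : S ⊆ U)
    (hTU : T ⊆ U) (hU : Bornology.IsBounded U) : setDist S T ≤ diam U := by
  obtain ⟨p, hp⟩ := hS
  obtain ⟨q, hq⟩ := hT
  exact (setDist_le_dist hp hq).trans (dist_le_diam_of_mem hU (hSU hp) (hTU hq))

lemma HasDistortionAtMost.mul_diam_image_le_setDist_image {f : V → V} {δ c : ℝ} {X S T : Set V}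
    (hf : HasDistortionAtMost δ f X) (hX : Bornology.IsBounded X) (hSX : S ⊆ X) (hTX : T ⊆ X)
    (hS : S.Nonempty) (hT : T.Nonempty) (hc : 0 ≤ c)
    (hST : c * (Real.exp (2 * δ) * diam X) ≤ setDist S T) :
    c * diam (f '' X) ≤ setDist (f '' S) (f '' T) := by
  obtain ⟨l, hl, hf⟩ := hf
  have hdiam : diam (f '' X) ≤ Real.exp δ * (l * diam X) := by
    refine diam_le_of_forall_dist_le (mul_nonneg (Real.exp_pos δ).le
      (mul_nonneg hl.le diam_nonneg)) ?_
    rintro _ ⟨x, hx, rfl⟩ _ ⟨y, hy, rfl⟩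
    refine (hf x hx y hy).2.trans ?_
    gcongr
    exact dist_le_diam_of_mem hX hx hy
  refine le_setDist (hS.image f) (hT.image f) ?_
  rintro _ ⟨x, hx, rfl⟩ _ ⟨y, hy, rfl⟩
  calc c * diam (f '' X) ≤ c * (Real.exp δ * (l * diam X)) := by gcongr
    _ = Real.exp (-δ) * (l * (c * (Real.exp (2 * δ) * diam X))) := by
      rw [show δ = -δ + 2 * δ by ring, Real.exp_add]
      ring_nf
    _ ≤ Real.exp (-δ) * (l * dist x y) := by
      gcongr
      exact hST.trans (setDist_le_dist hx hy)
    _ ≤ dist (f x) (f y) := (hf x (hSX hx) y (hTX hy)).1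

lemma exists_eq_append_cons_of_maximal_prefix {l l' w : List A} (hll' : ¬ l <+: l')
    (hl'l : ¬ l' <+: l) (hwl : w <+: l) (hwl' : w <+: l')
    (hmax : ∀ w' : List A, w' <+: l → w' <+: l' → w'.length ≤ w.length) :
    ∃ a u a' u', l = w ++ a :: u ∧ l' = w ++ a' :: u' ∧ a ≠ a' := by
  obtain ⟨_ | ⟨a, u⟩, rfl⟩ := hwl
  · exact absurd (by simpa using hwl') hll'
  obtain ⟨_ | ⟨a', u'⟩, rfl⟩ := hwl'
  · exact absurd (by simp) hl'l
  refine ⟨a, u, a', u', rfl, rfl, ?_⟩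
  rintro rfl
  simpa using hmax (w ++ [a]) ⟨u, by simp⟩ ⟨u', by simp⟩

variable {φ : A → V → V} {X : Set V}

lemma setDist_listMap_append_le_diam (hXne : X.Nonempty) (hXb : Bornology.IsBounded X)
    (hX : ∀ a, Set.MapsTo (φ a) X X) (w u u' : List A) :
    setDist (listMap φ (w ++ u) '' X) (listMap φ (w ++ u') '' X) ≤ diam (listMap φ w '' X) := by
  rw [listMap_append_image, listMap_append_image]
  exact setDist_le_diam ((hXne.image _).image _) ((hXne.image _).image _)
    (Set.image_mono (mapsTo_listMap hX u).image_subset)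
    (Set.image_mono (mapsTo_listMap hX u').image_subset)
    (hXb.subset (mapsTo_listMap hX w).image_subset)

lemma setDist_image_le_setDist_listMap_cons (hXne : X.Nonempty) (hX : ∀ a, Set.MapsTo (φ a) X X)
    (a a' : A) (u u' : List A) : setDist (φ a '' X) (φ a' '' X) ≤
      setDist (listMap φ (a :: u) '' X) (listMap φ (a' :: u') '' X) := by
  have hsub (a : A) (u : List A) : listMap φ (a :: u) '' X ⊆ φ a '' X := by
    rw [listMap, Set.image_comp]
    exact Set.image_mono (mapsTo_listMap hX u).image_subset
  exact setDist_anti (hXne.image _) (hXne.image _) (hsub a u) (hsub a' u')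

theorem exists_mul_diam_le_setDist_listMap (hXne : X.Nonempty) (hXb : Bornology.IsBounded X)
    (hX : ∀ a, Set.MapsTo (φ a) X X) {δ : ℝ} (hφ : ∀ w, HasDistortionAtMost δ (listMap φ w) X)
    {c₁ : ℝ} (hc₁ : 0 < c₁) :
    ∃ c, 0 < c ∧ c ≤ 1 ∧ ∀ (w u u' : List A) (a a' : A),
      c₁ ≤ setDist (φ a '' X) (φ a' '' X) → c * diam (listMap φ w '' X) ≤
        setDist (listMap φ (w ++ a :: u) '' X) (listMap φ (w ++ a' :: u') '' X) := by
  set M := Real.exp (2 * δ) * (diam X + 1)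
  have hM₀ : 0 < M := mul_pos (Real.exp_pos _) (by linarith [diam_nonneg (s := X)])
  refine ⟨min 1 (c₁ / M), lt_min one_pos (div_pos hc₁ hM₀), min_le_left _ _, ?_⟩
  intro w u u' a a' hsep
  rw [listMap_append_image, listMap_append_image]
  refine (hφ w).mul_diam_image_le_setDist_image hXb (mapsTo_listMap hX _).image_subset
    (mapsTo_listMap hX _).image_subset (hXne.image _) (hXne.image _) (by positivity) ?_
  calc min 1 (c₁ / M) * (Real.exp (2 * δ) * diam X) ≤ c₁ / M * M := by
        gcongr
        · exact min_le_right _ _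
        · exact mul_le_mul_of_nonneg_left (by linarith) (Real.exp_pos _).le
    _ = c₁ := div_mul_cancel₀ c₁ hM₀.ne'
    _ ≤ setDist (φ a '' X) (φ a' '' X) := hsep
    _ ≤ _ := setDist_image_le_setDist_listMap_cons hXne hX a a' u u'

end Separation

lemma conformal_of_norm_fderiv_apply {F G : Type*} [NormedAddCommGroup F] [NormedSpace ℝ F]
    [NormedAddCommGroup G] [NormedSpace ℝ G] {f : F → G} (hf : ContDiff ℝ 1 f)
    (hf' : ∀ x, 0 < ‖fderiv ℝ f x‖ ∧ ∀ v, ‖fderiv ℝ f x v‖ = ‖fderiv ℝ f x‖ * ‖v‖) :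
    Conformal f := by
  intro x
  obtain ⟨hpos, hnorm⟩ := hf' x
  let unitary : F →ₗᵢ[ℝ] G :=
    { toLinearMap := ‖fderiv ℝ f x‖⁻¹ • (fderiv ℝ f x : F →ₗ[ℝ] G)
      norm_map' := fun v => by simp [norm_smul, hnorm, hpos.ne'] }
  refine ⟨fderiv ℝ f x, (hf.differentiable one_ne_zero x).hasFDerivAt, ‖fderiv ℝ f x‖, hpos.ne',
    unitary, ?_⟩
  ext v
  simp [unitary, hpos.ne']

lemma mapsTo_of_eq_iUnion_image {α ι : Type*} {f : ι → α → α} {s : Set α} (hs : s = ⋃ i, f i '' s)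
    (i : ι) : Set.MapsTo (f i) s s :=
  Set.mapsTo_iff_image_subset.2 ((Set.subset_iUnion (fun i => f i '' s) i).trans hs.superset)

theorem separation_lemma_general {V A ι : Type*} [NormedAddCommGroup V] [InnerProductSpace ℝ V]
    [FiniteDimensional ℝ V] [Finite A] {φ : A → V → V}
    (hφcontr : ∀ a, ∃ r, IsContractionWith r (φ a)) (hφ : ∀ a, ContDiff ℝ 1 (φ a))
    (hφc : ∀ a, Conformal (φ a)) {H α : ℝ} (hH : 0 ≤ H) (hα : 0 < α)
    (hHölder : ∀ a x y, |‖fderiv ℝ (φ a) x‖ - ‖fderiv ℝ (φ a) y‖| ≤ H * ‖x - y‖ ^ α)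
    {X : Set V} (hXne : X.Nonempty) (hXb : Bornology.IsBounded X)
    (hX : ∀ a, Set.MapsTo (φ a) X X) (Ab : ι → Set A) {c₁ : ℝ} (hc₁ : 0 < c₁)
    (hsep : ∀ i, ∀ a ∈ Ab i, ∀ a' ∈ Ab i, a ≠ a' → c₁ ≤ setDist (φ a '' X) (φ a' '' X)) :
    ∃ c : ℝ, 0 < c ∧ c ≤ 1 ∧
      ∀ (b : ℕ → ι) (l l' : List A),
        (∀ j : Fin l.length, l.get j ∈ Ab (b (j : ℕ))) →
        (∀ j : Fin l'.length, l'.get j ∈ Ab (b (j : ℕ))) →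
        ¬ l <+: l' → ¬ l' <+: l →
        ∀ w : List A, w <+: l → w <+: l' →
          (∀ w' : List A, w' <+: l → w' <+: l' → w'.length ≤ w.length) →
          c * diam (listMap φ w '' X) ≤ setDist (listMap φ l '' X) (listMap φ l' '' X) ∧
            setDist (listMap φ l '' X) (listMap φ l' '' X) ≤ diam (listMap φ w '' X) := by
  obtain ⟨δ, hδ⟩ := exists_hasDistortionAtMost_listMap hφcontr hφ hφc hH hα hHölder hXb hX
  obtain ⟨c, hc₀, hc_le, hc⟩ := exists_mul_diam_le_setDist_listMap hXne hXb hX hδ hc₁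
  refine ⟨c, hc₀, hc_le, fun b l l' hl hl' hll' hl'l w hwl hwl' hmax => ?_⟩
  obtain ⟨a, u, a', u', rfl, rfl, hne⟩ :=
    exists_eq_append_cons_of_maximal_prefix hll' hl'l hwl hwl' hmax
  have ha : a ∈ Ab (b w.length) := by simpa using hl ⟨w.length, by simp⟩
  have ha' : a' ∈ Ab (b w.length) := by simpa using hl' ⟨w.length, by simp⟩
  exact ⟨hc w u u' a a' (hsep _ a ha a' ha' hne),
    setDist_listMap_append_le_diam hXne hXb hX w (a :: u) (a' :: u')⟩

/-- Separation lemma: distance between images of incomparable words is comparable to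
the diameter of the image of their maximal common prefix. -/
theorem separation_lemma
    (d : ℕ) {A : Type*} [Fintype A]
    (φ : A → EuclideanSpace ℝ (Fin d) → EuclideanSpace ℝ (Fin d))
    (hΦ : IsSelfConformalIFS φ)
    (X : Set (EuclideanSpace ℝ (Fin d))) (hXne : X.Nonempty) (hXc : IsCompact X)
    (hXinv : X = ⋃ a, φ a '' X)
    (Ab : A → Set A) (c₁ : ℝ) (hc₁ : 0 < c₁)
    (hsep : ∀ b : A, ∀ a ∈ Ab b, ∀ a' ∈ Ab b, a ≠ a' →
      c₁ ≤ setDist (φ a '' X) (φ a' '' X)) :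
    ∃ c : ℝ, 0 < c ∧ c ≤ 1 ∧
      ∀ (b : ℕ → A) (l l' : List A),
        (∀ j : Fin l.length, l.get j ∈ Ab (b (j : ℕ))) →
        (∀ j : Fin l'.length, l'.get j ∈ Ab (b (j : ℕ))) →
        ¬ l <+: l' → ¬ l' <+: l →
        ∀ w : List A, w <+: l → w <+: l' →
          (∀ w' : List A, w' <+: l → w' <+: l' → w'.length ≤ w.length) →
          c * Metric.diam (listMap φ w '' X) ≤
              setDist (listMap φ l '' X) (listMap φ l' '' X) ∧
            setDist (listMap φ l '' X) (listMap φ l' '' X) ≤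
              Metric.diam (listMap φ w '' X) := by
  obtain ⟨-, hcontr, hC1, hconf, ⟨H, α, hH, hα, hHölder⟩, -⟩ := hΦ
  have hconformal (a : A) : Conformal (φ a) := conformal_of_norm_fderiv_apply (hC1 a) (hconf a)
  exact separation_lemma_general hcontr hC1 hconformal hH.le hα hHölder hXne hXc.isBounded
    (mapsTo_of_eq_iUnion_image hXinv) Ab hc₁ hsep
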